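/- arXiv:1706.01281 — 6 statements merged into one kernel-verified Lean document; each statement's English description precedes it below -/
import Mathlib

section
/- Let N ≥ 1, d ≥ 2, let Ω ⊆ ℝ^N be an open set, let n₀ : Ω → S^{d-1} be a Lebesgue-measurable map, and let (ρ_k) be a sequence of mollifiers. Then there exists a Lebesgue-measurable map n : Ω → S^{d-1} with n(x) ∈ {n₀(x), −n₀(x)} for a.e. x ∈ Ω, such that liminf_{k→∞} ∬_{Ω×Ω} arccos⟪n(x), n(y)⟫ / |x−y| · ρ_k(|x−y|) dx dy ≤ 2 · liminf_{k→∞} ∬_{Ω×Ω} min( arccos⟪n₀(x), n₀(y)⟫, π − arccos⟪n₀(x), n₀(y)⟫ ) / |x−y| · ρ_k(|x−y|) dx dy, where all double integrals are Lebesgue integrals with values in [0,∞]. -/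
/-!
STATEMENT 0: Geodesic BV-lifting estimate (measurable/mollified formulation) with the
optimal constant 2: any measurable `n₀ : Ω → S^{d-1}` (representing a map into `ℝP^{d-1}`)
admits a measurable choice of signs `n` whose intrinsic Korevaar–Schoen BV-energy into
`S^{d-1}` is at most twice the intrinsic BV-energy of the unoriented map into `ℝP^{d-1}`.
-/

noncomputable section
open MeasureTheory Real Filter
open scoped ENNReal RealInnerProductSpace

/-- Two linear functionals restricted to the circle have different signs on a set of
measure at most `2θ`. -/
lemma circle_sep (a b θ : ℝ) (h0 : 0 ≤ θ) (h1 : θ ≤ π) :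
    volume ({τ : ℝ | ¬ (0 ≤ a * cos τ + b * sin τ ↔
      0 ≤ a * cos (τ - θ) + b * sin (τ - θ))} ∩ Set.Ioc 0 (0 + 2 * π)) ≤
      ENNReal.ofReal (2 * θ) := by
  set A : Set ℝ := {τ : ℝ | ¬ (0 ≤ a * cos τ + b * sin τ ↔
      0 ≤ a * cos (τ - θ) + b * sin (τ - θ))} with hA
  obtain ⟨r, φ, hr, ha, hb⟩ : ∃ r φ : ℝ, 0 ≤ r ∧ a = r * cos φ ∧ b = r * sin φ :=
    ⟨‖(⟨a, b⟩ : ℂ)‖, (⟨a, b⟩ : ℂ).arg, norm_nonneg _,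
      (Complex.norm_mul_cos_arg ⟨a, b⟩).symm, (Complex.norm_mul_sin_arg ⟨a, b⟩).symm⟩
  have hform : ∀ τ, a * cos τ + b * sin τ = r * cos (τ - φ) := by
    intro τ; rw [cos_sub, ha, hb]; ring
  rcases hr.eq_or_lt with hr | hr
  · have : A = ∅ := by
      ext τ; simp [hA, hform, ← hr]
    simp [this]
  have hA' : A = {τ : ℝ | ¬ (0 ≤ cos (τ - φ) ↔ 0 ≤ cos (τ - θ - φ))} := by
    ext τ; simp only [hA, hform, Set.mem_ofPred_eq, mul_nonneg_iff_of_pos_left hr]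
  have hAm : MeasurableSet A := by
    rw [hA]; measurability
  have hinv : ∀ g : AddSubgroup.zmultiples (2 * π), (fun x => g +ᵥ x) ⁻¹' A = A := by
    rintro ⟨g, hg⟩
    obtain ⟨k, rfl⟩ := AddSubgroup.mem_zmultiples_iff.1 hg
    ext τ
    have e1 : ∀ s : ℝ, cos (k • (2 * π) + τ - s) = cos (τ - s) := by
      intro s
      rw [show k • (2 * π) + τ - s = (τ - s) + k * (2 * π) by simp; ring]
      exact cos_add_int_mul_two_pi _ _
    simp only [hA', Set.mem_preimage, Set.mem_ofPred_eq, AddSubgroup.mk_vadd, vadd_eq_add,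
      sub_sub _ θ φ, e1]
  rw [(isAddFundamentalDomain_Ioc (by positivity : 0 < 2 * π) 0 volume).measure_set_eq
    (isAddFundamentalDomain_Ioc (by positivity : 0 < 2 * π) (φ - π / 2) volume) hAm hinv]
  have hsub : A ∩ Set.Ioc (φ - π / 2) (φ - π / 2 + 2 * π) ⊆
      (Set.Icc (φ - π / 2) (φ - π / 2 + θ) ∪ Set.Icc (φ + π / 2) (φ + π / 2 + θ)) ∪
        {φ - π / 2 + 2 * π} := by
    rintro τ ⟨hτ, h2, h3⟩
    by_contra hcon
    simp only [Set.mem_union, Set.mem_Icc, Set.mem_singleton_iff, not_or, not_and, not_le] at hcon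
    obtain ⟨⟨c1, c2⟩, c3⟩ := hcon
    have c1 := c1 h2.le
    have h3 := lt_of_le_of_ne h3 c3
    rw [hA'] at hτ
    apply hτ
    by_cases h4 : φ + π / 2 ≤ τ
    · have c2 := c2 h4
      have p1 : cos (τ - φ) < 0 :=
        cos_neg_of_pi_div_two_lt_of_lt (by linarith) (by linarith)
      have p2 : cos (τ - θ - φ) < 0 :=
        cos_neg_of_pi_div_two_lt_of_lt (by linarith) (by linarith)
      exact ⟨fun h => absurd h p1.not_ge, fun h => absurd h p2.not_ge⟩
    · have p1 : 0 ≤ cos (τ - φ) :=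
        cos_nonneg_of_neg_pi_div_two_le_of_le (by linarith) (by linarith)
      have p2 : 0 ≤ cos (τ - θ - φ) :=
        cos_nonneg_of_neg_pi_div_two_le_of_le (by linarith) (by linarith)
      exact ⟨fun _ => p2, fun _ => p1⟩
  refine (measure_mono hsub).trans ((measure_union_le _ _).trans ?_)
  rw [Real.volume_singleton, add_zero]
  refine (measure_union_le _ _).trans ?_
  rw [Real.volume_Icc, Real.volume_Icc, ← ENNReal.ofReal_add (by linarith) (by linarith)]
  apply ENNReal.ofReal_le_ofReal
  linarith

/-- Crofton type estimate: a random hyperplane separates `u` and `v` with probability at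
most `angle / π`. -/
lemma crofton {d : ℕ} (μ : Measure (EuclideanSpace ℝ (Fin d))) [IsProbabilityMeasure μ]
    (hμ : ∀ L : EuclideanSpace ℝ (Fin d) ≃ₗᵢ[ℝ] EuclideanSpace ℝ (Fin d),
      MeasurePreserving L μ μ)
    (u v : EuclideanSpace ℝ (Fin d)) (hu : ‖u‖ = 1) (hv : ‖v‖ = 1) :
    ENNReal.ofReal π * μ {e | ¬ (0 ≤ ⟪u, e⟫ ↔ 0 ≤ ⟪v, e⟫)} ≤
      ENNReal.ofReal (arccos ⟪u, v⟫) := by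
  set θ := arccos ⟪u, v⟫ with hθ
  have hθ0 : 0 ≤ θ := arccos_nonneg _
  have hθ1 : θ ≤ π := arccos_le_pi _
  have habs : |⟪u, v⟫| ≤ 1 := by
    have := abs_real_inner_le_norm u v
    rwa [hu, hv, one_mul] at this
  have hcos : cos θ = ⟪u, v⟫ := cos_arccos (abs_le.1 habs).1 (abs_le.1 habs).2
  set S : Set (EuclideanSpace ℝ (Fin d)) := {e | ¬ (0 ≤ ⟪u, e⟫ ↔ 0 ≤ ⟪v, e⟫)} with hS
  rcases hθ0.eq_or_lt with h0 | h0
  · have huv : u = v := by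
      rw [← inner_eq_one_iff_of_norm_eq_one (𝕜 := ℝ) hu hv, ← hcos, ← h0, cos_zero]
    simp [hS, huv]
  rcases hθ1.eq_or_lt with h1 | h1
  · rw [h1]
    calc _ ≤ ENNReal.ofReal π * 1 := by gcongr; exact prob_le_one
      _ = _ := mul_one _
  have hsin : 0 < sin θ := sin_pos_of_pos_of_lt_pi h0 h1
  have huu : ⟪u, u⟫ = (1 : ℝ) := by rw [real_inner_self_eq_norm_sq, hu]; norm_num
  have hvv : ⟪v, v⟫ = (1 : ℝ) := by rw [real_inner_self_eq_norm_sq, hv]; norm_num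
  set w : EuclideanSpace ℝ (Fin d) := (sin θ)⁻¹ • (v - cos θ • u) with hw
  have hvw : v = cos θ • u + sin θ • w := by
    rw [hw, smul_smul, mul_inv_cancel₀ hsin.ne', one_smul]; abel
  have huw : ⟪u, w⟫ = (0 : ℝ) := by
    rw [hw, inner_smul_right, inner_sub_right, inner_smul_right, huu, hcos]; ring
  have hwu : ⟪w, u⟫ = (0 : ℝ) := by rw [real_inner_comm, huw]
  have hww : ⟪w, w⟫ = (1 : ℝ) := by
    have h2 := hvv
    rw [hvw] at h2
    simp only [inner_add_left, inner_add_right, inner_smul_left, inner_smul_right, huu, huw,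
      hwu, conj_trivial] at h2
    have h3 : sin θ ^ 2 * (⟪w, w⟫ - 1) = 0 := by
      have := sin_sq_add_cos_sq θ
      linear_combination h2 - this
    rcases mul_eq_zero.1 h3 with h | h
    · exact absurd h (by positivity)
    · linarith
  -- the reflections
  let m : ℝ → EuclideanSpace ℝ (Fin d) := fun τ => cos (τ / 2) • u + sin (τ / 2) • w
  have hmm : ∀ τ, ‖m τ‖ = 1 := by
    intro τ
    have : ‖m τ‖ ^ 2 = 1 := by
      rw [← real_inner_self_eq_norm_sq]
      simp only [m, inner_add_left, inner_add_right, inner_smul_left, inner_smul_right, huu, huw,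
        hwu, hww, conj_trivial]
      have := sin_sq_add_cos_sq (τ / 2)
      linear_combination this
    nlinarith [norm_nonneg (m τ)]
  let R : ℝ → EuclideanSpace ℝ (Fin d) → EuclideanSpace ℝ (Fin d) :=
    fun τ e => (2 * ⟪m τ, e⟫) • m τ - e
  have hRpres : ∀ τ, MeasurePreserving (R τ) μ μ := by
    intro τ
    convert hμ (Submodule.reflection (Submodule.span ℝ {m τ})) using 1
    ext1 e
    rw [Submodule.reflection_singleton_apply]
    simp [R, hmm, mul_smul, two_smul]
  have hRu : ∀ τ e, ⟪u, R τ e⟫ = ⟪u, e⟫ * cos τ + ⟪w, e⟫ * sin τ := by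
    intro τ e
    have hc : cos τ = 2 * cos (τ / 2) ^ 2 - 1 := by rw [← cos_two_mul]; congr 1; ring
    have hs : sin τ = 2 * sin (τ / 2) * cos (τ / 2) := by rw [← sin_two_mul]; congr 1; ring
    simp only [R, m, inner_sub_right, inner_add_left, inner_add_right, inner_smul_left,
      inner_smul_right, huu, huw, conj_trivial]
    rw [hc, hs]; ring
  have hRw : ∀ τ e, ⟪w, R τ e⟫ = ⟪u, e⟫ * sin τ - ⟪w, e⟫ * cos τ := by
    intro τ e
    have hc : cos τ = 1 - 2 * sin (τ / 2) ^ 2 := by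
      have h1 : cos τ = 2 * cos (τ / 2) ^ 2 - 1 := by rw [← cos_two_mul]; congr 1; ring
      have := sin_sq_add_cos_sq (τ / 2)
      linarith
    have hs : sin τ = 2 * sin (τ / 2) * cos (τ / 2) := by rw [← sin_two_mul]; congr 1; ring
    simp only [R, m, inner_sub_right, inner_add_left, inner_add_right, inner_smul_left,
      inner_smul_right, hwu, hww, conj_trivial]
    rw [hc, hs]; ring
  have hRv : ∀ τ e, ⟪v, R τ e⟫ = ⟪u, e⟫ * cos (τ - θ) + ⟪w, e⟫ * sin (τ - θ) := by
    intro τ e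
    rw [hvw, inner_add_left, inner_smul_left, inner_smul_left, hRu, hRw, cos_sub, sin_sub]
    simp only [conj_trivial]; ring
  have hSm : MeasurableSet S := by
    rw [hS]
    have h1 : MeasurableSet {e : EuclideanSpace ℝ (Fin d) | 0 ≤ ⟪u, e⟫} :=
      measurableSet_le measurable_const (by fun_prop)
    have h2 : MeasurableSet {e : EuclideanSpace ℝ (Fin d) | 0 ≤ ⟪v, e⟫} :=
      measurableSet_le measurable_const (by fun_prop)
    exact (h1.iff h2).compl
  let P : Set (ℝ × EuclideanSpace ℝ (Fin d)) := {p | R p.1 p.2 ∈ S}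
  have hPm : MeasurableSet P := by
    have : Measurable (fun p : ℝ × EuclideanSpace ℝ (Fin d) => R p.1 p.2) := by
      apply Continuous.measurable
      simp only [R, m]
      fun_prop
    exact this hSm
  have key : ENNReal.ofReal (2 * π) * μ S ≤ ENNReal.ofReal (2 * θ) := by
    calc ENNReal.ofReal (2 * π) * μ S
        = ∫⁻ τ in Set.Ioc 0 (0 + 2 * π), μ (Prod.mk τ ⁻¹' P) := by
          have : ∀ τ, μ (Prod.mk τ ⁻¹' P) = μ S := fun τ =>
            (hRpres τ).measure_preimage hSm.nullMeasurableSet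
          simp only [this, lintegral_const, Measure.restrict_apply_univ, Real.volume_Ioc]
          rw [mul_comm]; simp
      _ = ((volume.restrict (Set.Ioc 0 (0 + 2 * π))).prod μ) P := (Measure.prod_apply hPm).symm
      _ = ∫⁻ e, (volume.restrict (Set.Ioc 0 (0 + 2 * π))) ((fun τ => (τ, e)) ⁻¹' P) ∂μ :=
          Measure.prod_apply_symm hPm
      _ ≤ ∫⁻ e, ENNReal.ofReal (2 * θ) ∂μ := by
          apply lintegral_mono
          intro e
          dsimp only
          rw [Measure.restrict_apply (measurable_prodMk_right hPm)]
          have := circle_sep ⟪u, e⟫ ⟪w, e⟫ θ hθ0 hθ1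
          convert this using 3
          ext τ
          simp only [P, hS, Set.mem_preimage, Set.mem_ofPred_eq, hRu, hRv]
      _ = _ := by simp
  rw [ENNReal.ofReal_mul (by norm_num), ENNReal.ofReal_mul (by norm_num), mul_assoc] at key
  exact (ENNReal.mul_le_mul_iff_right (by simp) (by simp)).1 key

/-- orient `u` towards `e` -/
def orient {d : ℕ} (e u : EuclideanSpace ℝ (Fin d)) : EuclideanSpace ℝ (Fin d) :=
  open Classical in if 0 ≤ ⟪u, e⟫ then u else -u

lemma orient_or {d : ℕ} (e u : EuclideanSpace ℝ (Fin d)) :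
    orient e u = u ∨ orient e u = -u := by
  unfold orient; split_ifs <;> simp

lemma orient_meas {d : ℕ} : Measurable
    (fun p : EuclideanSpace ℝ (Fin d) × EuclideanSpace ℝ (Fin d) => orient p.1 p.2) := by
  unfold orient
  exact Measurable.ite (measurableSet_le measurable_const (by fun_prop)) (by fun_prop)
    (by fun_prop)

lemma average_acute {d : ℕ} (μ : Measure (EuclideanSpace ℝ (Fin d))) [IsProbabilityMeasure μ]
    (hμ : ∀ L : EuclideanSpace ℝ (Fin d) ≃ₗᵢ[ℝ] EuclideanSpace ℝ (Fin d),
      MeasurePreserving L μ μ)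
    (u v : EuclideanSpace ℝ (Fin d)) (hu : ‖u‖ = 1) (hv : ‖v‖ = 1)
    (_hα : arccos ⟪u, v⟫ ≤ π / 2) :
    ∫⁻ e, ENNReal.ofReal (arccos ⟪orient e u, orient e v⟫) ∂μ ≤
      2 * ENNReal.ofReal (arccos ⟪u, v⟫) := by
  have hc := crofton μ hμ u v hu hv
  set α := arccos ⟪u, v⟫ with hαd
  have hα0 : 0 ≤ α := arccos_nonneg _
  set S : Set (EuclideanSpace ℝ (Fin d)) := {e | ¬ (0 ≤ ⟪u, e⟫ ↔ 0 ≤ ⟪v, e⟫)} with hS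
  have hSm : MeasurableSet S := by
    rw [hS]
    have h1 : MeasurableSet {e : EuclideanSpace ℝ (Fin d) | 0 ≤ ⟪u, e⟫} :=
      measurableSet_le measurable_const (by fun_prop)
    have h2 : MeasurableSet {e : EuclideanSpace ℝ (Fin d) | 0 ≤ ⟪v, e⟫} :=
      measurableSet_le measurable_const (by fun_prop)
    exact (h1.iff h2).compl
  calc _ ≤ ∫⁻ e, (ENNReal.ofReal α + S.indicator (fun _ => ENNReal.ofReal π) e) ∂μ := by
        apply lintegral_mono
        intro e
        by_cases he : e ∈ S
        · simp only [he, Set.indicator_of_mem]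
          refine le_trans ?_ le_add_self
          exact ENNReal.ofReal_le_ofReal (arccos_le_pi _)
        · simp only [he, Set.indicator_of_notMem, not_false_eq_true, add_zero]
          apply ENNReal.ofReal_le_ofReal
          have he : 0 ≤ ⟪u, e⟫ ↔ 0 ≤ ⟪v, e⟫ := by simpa [hS] using he
          rw [hαd]
          unfold orient
          by_cases h : 0 ≤ ⟪v, e⟫
          · simp [h, he]
          · simp [h, he]
    _ = ENNReal.ofReal α + ENNReal.ofReal π * μ S := by
        rw [lintegral_add_left measurable_const, lintegral_indicator_const hSm]
        simp
    _ ≤ ENNReal.ofReal α + ENNReal.ofReal α := by gcongr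
    _ = _ := (two_mul _).symm

lemma average {d : ℕ} (μ : Measure (EuclideanSpace ℝ (Fin d))) [IsProbabilityMeasure μ]
    (hμ : ∀ L : EuclideanSpace ℝ (Fin d) ≃ₗᵢ[ℝ] EuclideanSpace ℝ (Fin d),
      MeasurePreserving L μ μ)
    (hac : μ ≪ volume)
    (u v : EuclideanSpace ℝ (Fin d)) (hu : ‖u‖ = 1) (hv : ‖v‖ = 1) :
    ∫⁻ e, ENNReal.ofReal (arccos ⟪orient e u, orient e v⟫) ∂μ ≤
      2 * ENNReal.ofReal (min (arccos ⟪u, v⟫) (π - arccos ⟪u, v⟫)) := by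
  rcases le_total (arccos ⟪u, v⟫) (π / 2) with h | h
  · rw [min_eq_left (by linarith)]
    exact average_acute μ hμ u v hu hv h
  · rw [min_eq_right (by linarith)]
    have hneg : arccos ⟪u, -v⟫ = π - arccos ⟪u, v⟫ := by rw [inner_neg_right, arccos_neg]
    have := average_acute μ hμ u (-v) hu (by rwa [norm_neg]) (by rw [hneg]; linarith)
    rw [hneg] at this
    refine le_trans (le_of_eq ?_) this
    apply lintegral_congr_ae
    have hnull : volume {e : EuclideanSpace ℝ (Fin d) | ⟪v, e⟫ = 0} = 0 := by
      have h1 := Measure.addHaar_submodule (volume : Measure (EuclideanSpace ℝ (Fin d)))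
        (LinearMap.ker (innerSL ℝ v).toLinearMap) (by
          intro htop
          have : v ∈ LinearMap.ker (innerSL ℝ v).toLinearMap := by rw [htop]; trivial
          have : ⟪v, v⟫ = (0 : ℝ) := this
          rw [real_inner_self_eq_norm_sq, hv] at this
          norm_num at this)
      exact h1
    have hae : ∀ᵐ e ∂μ, ⟪v, e⟫ ≠ 0 := by
      rw [ae_iff]
      simpa using hac hnull
    filter_upwards [hae] with e he
    congr 3
    unfold orient
    rcases lt_or_gt_of_ne he with h | h
    · simp [h.not_ge, h.le]
    · simp [h.not_ge, h.le]

lemma exists_measure (d : ℕ) : ∃ μ : Measure (EuclideanSpace ℝ (Fin d)),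
    IsProbabilityMeasure μ ∧ (∀ L : EuclideanSpace ℝ (Fin d) ≃ₗᵢ[ℝ] EuclideanSpace ℝ (Fin d),
      MeasurePreserving L μ μ) ∧ μ ≪ volume := by
  have h0 : volume (Metric.ball (0 : EuclideanSpace ℝ (Fin d)) 1) ≠ 0 :=
    (Metric.measure_ball_pos _ _ one_pos).ne'
  refine ⟨ProbabilityTheory.cond volume (Metric.ball 0 1), ?_, ?_, ?_⟩
  · exact ProbabilityTheory.cond_isProbabilityMeasure_of_finite h0 measure_ball_lt_top.ne
  · intro L
    unfold ProbabilityTheory.cond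
    apply MeasurePreserving.smul_measure
    have h := L.measurePreserving.restrict_preimage
      (s := Metric.ball (0 : EuclideanSpace ℝ (Fin d)) 1) measurableSet_ball
    have h2 : L ⁻¹' Metric.ball (0 : EuclideanSpace ℝ (Fin d)) 1 = Metric.ball 0 1 := by
      rw [LinearIsometryEquiv.preimage_ball]; simp
    rwa [h2] at h
  · exact ProbabilityTheory.cond_absolutelyContinuous

theorem geodesic_lifting_estimate
    (N d : ℕ) (hN : 1 ≤ N) (hd : 2 ≤ d)
    (Ω : Set (EuclideanSpace ℝ (Fin N))) (hΩ : IsOpen Ω)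
    (n₀ : EuclideanSpace ℝ (Fin N) → EuclideanSpace ℝ (Fin d))
    (hn₀meas : Measurable n₀) (hn₀sph : ∀ x, ‖n₀ x‖ = 1)
    (ρ : ℕ → ℝ → ℝ) (hρmeas : ∀ k, Measurable (ρ k))
    (hρnonneg : ∀ k, ∀ r > (0 : ℝ), 0 ≤ ρ k r)
    (hρint : ∀ k, ∫⁻ x : EuclideanSpace ℝ (Fin N), ENNReal.ofReal (ρ k ‖x‖) = 1)
    (hρconc : ∀ h > (0 : ℝ), Tendsto
      (fun k => ∫⁻ x in {x : EuclideanSpace ℝ (Fin N) | h < ‖x‖}, ENNReal.ofReal (ρ k ‖x‖))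
      atTop (nhds 0)) :
    ∃ n : EuclideanSpace ℝ (Fin N) → EuclideanSpace ℝ (Fin d),
      Measurable n ∧ (∀ x, ‖n x‖ = 1) ∧
      (∀ᵐ x ∂(volume.restrict Ω), n x = n₀ x ∨ n x = -n₀ x) ∧
      liminf (fun k => ∫⁻ x in Ω, ∫⁻ y in Ω,
          ENNReal.ofReal (Real.arccos ⟪n x, n y⟫ / ‖x - y‖ * ρ k ‖x - y‖)) atTop ≤
      2 * liminf (fun k => ∫⁻ x in Ω, ∫⁻ y in Ω,
          ENNReal.ofReal (min (Real.arccos ⟪n₀ x, n₀ y⟫)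
            (π - Real.arccos ⟪n₀ x, n₀ y⟫) / ‖x - y‖ * ρ k ‖x - y‖)) atTop := by
  obtain ⟨μ, hprob, hμ, hac⟩ := exists_measure d
  let F : ℕ → EuclideanSpace ℝ (Fin d) → ℝ≥0∞ := fun k e => ∫⁻ x in Ω, ∫⁻ y in Ω,
    ENNReal.ofReal (Real.arccos ⟪orient e (n₀ x), orient e (n₀ y)⟫ / ‖x - y‖ * ρ k ‖x - y‖)
  have horm : Measurable (fun p : EuclideanSpace ℝ (Fin d) × EuclideanSpace ℝ (Fin N) =>
      orient p.1 (n₀ p.2)) :=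
    orient_meas.comp (measurable_fst.prodMk (hn₀meas.comp measurable_snd))
  have hjoint : ∀ k, Measurable (fun p : (EuclideanSpace ℝ (Fin d) × EuclideanSpace ℝ (Fin N)) ×
      EuclideanSpace ℝ (Fin N) => ENNReal.ofReal (Real.arccos
        ⟪orient p.1.1 (n₀ p.1.2), orient p.1.1 (n₀ p.2)⟫ / ‖p.1.2 - p.2‖ * ρ k ‖p.1.2 - p.2‖)) := by
    intro k
    have h1 : Measurable (fun p : (EuclideanSpace ℝ (Fin d) × EuclideanSpace ℝ (Fin N)) ×
      EuclideanSpace ℝ (Fin N) => orient p.1.1 (n₀ p.1.2)) := horm.comp measurable_fst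
    have h2 : Measurable (fun p : (EuclideanSpace ℝ (Fin d) × EuclideanSpace ℝ (Fin N)) ×
      EuclideanSpace ℝ (Fin N) => orient p.1.1 (n₀ p.2)) :=
      horm.comp ((measurable_fst.comp measurable_fst).prodMk measurable_snd)
    have h3 : Measurable (fun p : (EuclideanSpace ℝ (Fin d) × EuclideanSpace ℝ (Fin N)) ×
      EuclideanSpace ℝ (Fin N) => ‖p.1.2 - p.2‖) := by fun_prop
    exact (((Real.continuous_arccos.measurable.comp (h1.inner h2)).div h3).mul
      ((hρmeas k).comp h3)).ennreal_ofReal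
  have hinner : ∀ k, Measurable (fun p : EuclideanSpace ℝ (Fin d) × EuclideanSpace ℝ (Fin N) =>
      ∫⁻ y in Ω, ENNReal.ofReal (Real.arccos
        ⟪orient p.1 (n₀ p.2), orient p.1 (n₀ y)⟫ / ‖p.2 - y‖ * ρ k ‖p.2 - y‖)) :=
    fun k => (hjoint k).lintegral_prod_right'
  have hF : ∀ k, Measurable (F k) := fun k => (hinner k).lintegral_prod_right'
  have hbound : ∀ k, ∫⁻ e, F k e ∂μ ≤ 2 * ∫⁻ x in Ω, ∫⁻ y in Ω,
      ENNReal.ofReal (min (Real.arccos ⟪n₀ x, n₀ y⟫)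
        (π - Real.arccos ⟪n₀ x, n₀ y⟫) / ‖x - y‖ * ρ k ‖x - y‖) := by
    intro k
    simp only [F]
    rw [lintegral_lintegral_swap (hinner k).aemeasurable,
      ← lintegral_const_mul' _ _ (by simp)]
    apply lintegral_mono
    intro x
    dsimp only
    have hx : Measurable (Function.uncurry fun (e : EuclideanSpace ℝ (Fin d))
        (y : EuclideanSpace ℝ (Fin N)) => ENNReal.ofReal (Real.arccos
          ⟪orient e (n₀ x), orient e (n₀ y)⟫ / ‖x - y‖ * ρ k ‖x - y‖)) := by
      have hpm : Measurable (fun p : EuclideanSpace ℝ (Fin d) × EuclideanSpace ℝ (Fin N) =>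
        ((p.1, x), p.2)) := (measurable_fst.prodMk measurable_const).prodMk measurable_snd
      have hcomp := (hjoint k).comp hpm
      simp only [Function.comp_def] at hcomp
      simp only [Function.uncurry_def]
      exact hcomp
    rw [lintegral_lintegral_swap hx.aemeasurable,
      ← lintegral_const_mul' _ _ (by simp)]
    apply lintegral_mono
    intro y
    have hmin : 0 ≤ min (Real.arccos ⟪n₀ x, n₀ y⟫) (π - Real.arccos ⟪n₀ x, n₀ y⟫) :=
      le_min (arccos_nonneg _) (sub_nonneg.2 (arccos_le_pi _))
    simp only [div_mul_eq_mul_div, mul_div_assoc]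
    simp only [ENNReal.ofReal_mul hmin, ENNReal.ofReal_mul (arccos_nonneg _)]
    rw [lintegral_mul_const' _ _ (by simp), ← mul_assoc]
    gcongr
    exact average μ hμ hac _ _ (hn₀sph x) (hn₀sph y)
  obtain ⟨e, he⟩ := exists_le_lintegral (μ := μ)
    (f := fun e => liminf (fun k => F k e) atTop) (Measurable.liminf hF).aemeasurable
  refine ⟨fun x => orient e (n₀ x), horm.comp (measurable_const.prodMk measurable_id), ?_,
    Eventually.of_forall fun x => orient_or e (n₀ x), ?_⟩
  · intro x
    dsimp only
    rcases orient_or e (n₀ x) with h | h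
    · rw [h, hn₀sph]
    · rw [h, norm_neg, hn₀sph]
  · refine he.trans ((lintegral_liminf_le hF).trans ?_)
    rw [← ENNReal.liminf_const_mul_of_ne_top (by simp)]
    exact liminf_le_liminf (Eventually.of_forall hbound)
end
end

section
/- Let d ≥ 2 and let I ⊆ ℝ be an open interval. Let m : ℝ → S^{d-1} and suppose V := sup { Σ_{i=0}^{k-1} min( arccos⟪m(t_{i+1}), m(t_i)⟫, π − arccos⟪m(t_{i+1}), m(t_i)⟫ ) : k ∈ ℕ, t_0 ≤ t_1 ≤ … ≤ t_k, all t_i ∈ I } < ∞. Then there exists n : ℝ → S^{d-1} with n(t) ∈ {m(t), −m(t)} for all t ∈ I, such that sup { Σ_{i=0}^{k-1} arccos⟪n(t_{i+1}), n(t_i)⟫ : k ∈ ℕ, t_0 ≤ t_1 ≤ … ≤ t_k, all t_i ∈ I } ≤ V. -/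
noncomputable section
open Real
open scoped ENNReal RealInnerProductSpace

/-- Triangle inequality for the angle between unit vectors. -/
lemma arccos_triangle {d : ℕ} (x y z : EuclideanSpace ℝ (Fin d))
    (hx : ‖x‖ = 1) (hy : ‖y‖ = 1) (hz : ‖z‖ = 1) :
    ENNReal.ofReal (Real.arccos ⟪z, x⟫) ≤
      ENNReal.ofReal (Real.arccos ⟪z, y⟫) + ENNReal.ofReal (Real.arccos ⟪y, x⟫) := by
  rw [← ENNReal.ofReal_add (Real.arccos_nonneg _) (Real.arccos_nonneg _)]
  apply ENNReal.ofReal_le_ofReal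
  have h := InnerProductGeometry.angle_le_angle_add_angle z y x
  simpa [InnerProductGeometry.angle, hx, hy, hz] using h

/-- Optimal signs on a finite set, with `W` playing the role of the variation function. -/
lemma finite_lift {d : ℕ} (I : Set ℝ)
    (m : ℝ → EuclideanSpace ℝ (Fin d)) (hm : ∀ t, ‖m t‖ = 1) (W : ℝ → ℝ≥0∞)
    (hW : ∀ x ∈ I, ∀ y ∈ I, x ≤ y → W x + ENNReal.ofReal
        (min (Real.arccos ⟪m y, m x⟫) (π - Real.arccos ⟪m y, m x⟫)) ≤ W y)
    (F : Finset ℝ) : (∀ x ∈ F, x ∈ I) →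
    ∃ n : ℝ → EuclideanSpace ℝ (Fin d), (∀ t, n t = m t ∨ n t = -m t) ∧
      ∀ x ∈ F, ∀ y ∈ F, x ≤ y → W x + ENNReal.ofReal (Real.arccos ⟪n y, n x⟫) ≤ W y := by
  induction F using Finset.induction_on_max with
  | empty => exact fun _ => ⟨m, fun t => Or.inl rfl, by simp⟩
  | insert a s ha ih =>
    intro hI
    obtain ⟨n, hn, hs⟩ := ih (fun x hx => hI x (Finset.mem_insert_of_mem hx))
    have haI : a ∈ I := hI a (Finset.mem_insert_self _ _)
    have hn1 : ∀ t, ‖n t‖ = 1 := fun t => by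
      rcases hn t with h | h <;> simp [h, hm]
    have key : ∃ v : EuclideanSpace ℝ (Fin d), (v = m a ∨ v = -m a) ∧
        ∀ x ∈ s, W x + ENNReal.ofReal (Real.arccos ⟪v, n x⟫) ≤ W a := by
      rcases s.eq_empty_or_nonempty with rfl | hne
      · exact ⟨m a, Or.inl rfl, by simp⟩
      set b := s.max' hne with hb
      have hbs : b ∈ s := s.max'_mem hne
      have hbI : b ∈ I := hI b (Finset.mem_insert_of_mem hbs)
      have hba := hW b hbI a haI (ha b hbs).le
      obtain ⟨v, hv, hva⟩ : ∃ v : EuclideanSpace ℝ (Fin d), (v = m a ∨ v = -m a) ∧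
          Real.arccos ⟪v, n b⟫ =
            min (Real.arccos ⟪m a, m b⟫) (π - Real.arccos ⟪m a, m b⟫) := by
        rcases min_choice (Real.arccos ⟪m a, m b⟫) (π - Real.arccos ⟪m a, m b⟫) with h | h <;>
          rw [h] <;> rcases hn b with h' | h' <;> rw [h']
        · exact ⟨m a, Or.inl rfl, rfl⟩
        · exact ⟨-m a, Or.inr rfl, by simp⟩
        · exact ⟨-m a, Or.inr rfl, by simp [Real.arccos_neg]⟩
        · exact ⟨m a, Or.inl rfl, by simp [Real.arccos_neg]⟩
      have hv1 : ‖v‖ = 1 := by rcases hv with h | h <;> simp [h, hm]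
      refine ⟨v, hv, fun x hx => ?_⟩
      rw [← hva] at hba
      calc W x + ENNReal.ofReal (Real.arccos ⟪v, n x⟫)
          ≤ W x + (ENNReal.ofReal (Real.arccos ⟪v, n b⟫)
              + ENNReal.ofReal (Real.arccos ⟪n b, n x⟫)) := by
            gcongr; exact arccos_triangle _ _ _ (hn1 x) (hn1 b) hv1
        _ = (W x + ENNReal.ofReal (Real.arccos ⟪n b, n x⟫))
              + ENNReal.ofReal (Real.arccos ⟪v, n b⟫) := by ring
        _ ≤ W b + ENNReal.ofReal (Real.arccos ⟪v, n b⟫) := by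
            gcongr; exact hs x hx b hbs (s.le_max' x hx)
        _ ≤ W a := hba
    obtain ⟨v, hv, hvs⟩ := key
    have hv1 : ‖v‖ = 1 := by rcases hv with h | h <;> simp [h, hm]
    refine ⟨Function.update n a v, fun t => ?_, fun x hx y hy hxy => ?_⟩
    · by_cases h : t = a
      · subst h; simpa using hv
      · simpa [h] using hn t
    · rcases Finset.mem_insert.1 hx with rfl | hxs <;> rcases Finset.mem_insert.1 hy with rfl | hy
      · simp [hv1]
      · exact absurd hxy (not_le.2 (ha y hy))
      · simpa [(ha x hxs).ne] using hvs x hxs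
      · simpa [(ha x hxs).ne, (ha y hy).ne] using hs x hxs y hy hxy

/-- Chains of points of `I` ending at `x`. -/
def ChainTo (I : Set ℝ) (x : ℝ) : Type :=
  {p : ℕ × (ℕ → ℝ) // Monotone p.2 ∧ (∀ i ≤ p.1, p.2 i ∈ I) ∧ p.2 p.1 = x}

theorem one_dim_geodesic_lifting
    (d : ℕ) (hd : 2 ≤ d)
    (I : Set ℝ) (hIopen : IsOpen I) (hIinterval : I.OrdConnected)
    (m : ℝ → EuclideanSpace ℝ (Fin d)) (hm : ∀ t, ‖m t‖ = 1)
    (V : ℝ≥0∞)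
    (hV : V = ⨆ (k : ℕ) (t : ℕ → ℝ) (_ : Monotone t) (_ : ∀ i ≤ k, t i ∈ I),
      ∑ i ∈ Finset.range k, ENNReal.ofReal
        (min (Real.arccos ⟪m (t (i + 1)), m (t i)⟫)
          (π - Real.arccos ⟪m (t (i + 1)), m (t i)⟫)))
    (hVfin : V ≠ ⊤) :
    ∃ n : ℝ → EuclideanSpace ℝ (Fin d),
      (∀ t, ‖n t‖ = 1) ∧
      (∀ t ∈ I, n t = m t ∨ n t = -m t) ∧
      (⨆ (k : ℕ) (t : ℕ → ℝ) (_ : Monotone t) (_ : ∀ i ≤ k, t i ∈ I),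
        ∑ i ∈ Finset.range k, ENNReal.ofReal (Real.arccos ⟪n (t (i + 1)), n (t i)⟫)) ≤ V := by
  classical
  let D : ℝ → ℝ → ℝ≥0∞ := fun x y => ENNReal.ofReal
    (min (Real.arccos ⟪m y, m x⟫) (π - Real.arccos ⟪m y, m x⟫))
  let W : ℝ → ℝ≥0∞ := fun x => ⨆ p : ChainTo I x,
    ∑ i ∈ Finset.range p.1.1, D (p.1.2 i) (p.1.2 (i + 1))
  have hWV : ∀ x, W x ≤ V := by
    intro x
    refine iSup_le fun p => ?_
    rw [hV]
    exact le_iSup_of_le p.1.1 (le_iSup_of_le p.1.2 (le_iSup_of_le p.2.1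
      (le_iSup_of_le p.2.2.1 le_rfl)))
  have hW : ∀ x ∈ I, ∀ y ∈ I, x ≤ y → W x + D x y ≤ W y := by
    intro x hx y hy hxy
    haveI : Nonempty (ChainTo I x) :=
      ⟨⟨(0, fun _ => x), monotone_const, fun _ _ => hx, rfl⟩⟩
    change (⨆ p : ChainTo I x, _) + _ ≤ _
    rw [ENNReal.iSup_add]
    refine iSup_le ?_
    rintro ⟨⟨k, t⟩, ht, htI, htx⟩
    dsimp only at ht htI htx ⊢
    have hmono : Monotone (fun i => if i ≤ k then t i else y) := by
      intro i j hij
      dsimp only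
      split_ifs with h1 h2 h2
      · exact ht hij
      · exact ((ht h1).trans htx.le).trans hxy
      · omega
      · exact le_rfl
    let q : ChainTo I y := ⟨(k + 1, fun i => if i ≤ k then t i else y), hmono,
      fun i _ => by
        dsimp only
        split_ifs with h
        · exact htI i h
        · exact hy, by simp⟩
    refine le_trans (le_of_eq ?_) (le_iSup _ q)
    change _ = ∑ i ∈ Finset.range (k + 1), D (if i ≤ k then t i else y)
      (if i + 1 ≤ k then t (i + 1) else y)
    rw [Finset.sum_range_succ]
    congr 1
    · refine Finset.sum_congr rfl fun i hi => ?_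
      have := Finset.mem_range.1 hi
      rw [if_pos (by omega), if_pos (by omega)]
    · simp [htx]
  have hfin := fun F : Finset ℝ => finite_lift I m hm W hW (F.filter (· ∈ I))
    (fun x hx => (Finset.mem_filter.1 hx).2)
  choose N hN hNW using hfin
  let U : Ultrafilter (Finset ℝ) := Ultrafilter.of Filter.atTop
  have hU : (U : Filter (Finset ℝ)) ≤ Filter.atTop := Ultrafilter.of_le _
  let n : ℝ → EuclideanSpace ℝ (Fin d) := fun t =>
    if ∀ᶠ F in (U : Filter (Finset ℝ)), N F t = m t then m t else -m t
  have hn : ∀ t, n t = m t ∨ n t = -m t := by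
    intro t
    dsimp only [n]
    split_ifs
    · exact Or.inl rfl
    · exact Or.inr rfl
  have hnN : ∀ t, ∀ᶠ F in (U : Filter (Finset ℝ)), N F t = n t := by
    intro t
    dsimp only [n]
    split_ifs with h
    · exact h
    · rw [← Ultrafilter.eventually_not] at h
      filter_upwards [h] with F hF
      exact (hN F t).resolve_left hF
  have hnW : ∀ x ∈ I, ∀ y ∈ I, x ≤ y →
      W x + ENNReal.ofReal (Real.arccos ⟪n y, n x⟫) ≤ W y := by
    intro x hx y hy hxy
    have h3 : ∀ᶠ F in (U : Filter (Finset ℝ)), ({x, y} : Finset ℝ) ≤ F :=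
      hU (Filter.eventually_ge_atTop _)
    obtain ⟨F, h1, h2, h3⟩ := ((hnN x).and ((hnN y).and h3)).exists
    rw [← h1, ← h2]
    exact hNW F x (Finset.mem_filter.2 ⟨h3 (by simp), hx⟩)
      y (Finset.mem_filter.2 ⟨h3 (by simp), hy⟩) hxy
  refine ⟨n, fun t => ?_, fun t _ => hn t, ?_⟩
  · rcases hn t with h | h <;> simp [h, hm]
  refine iSup_le fun k => iSup_le fun t => iSup_le fun ht => iSup_le fun htI => ?_
  have tele : ∀ j ≤ k, W (t 0) + ∑ i ∈ Finset.range j,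
      ENNReal.ofReal (Real.arccos ⟪n (t (i + 1)), n (t i)⟫) ≤ W (t j) := by
    intro j
    induction j with
    | zero => simp
    | succ j ih =>
      intro hj
      rw [Finset.sum_range_succ, ← add_assoc]
      exact (add_le_add_left (ih (by omega)) _).trans
        (hnW _ (htI j (by omega)) _ (htI (j + 1) hj) (ht (by omega)))
  exact le_add_self.trans ((tele k le_rfl).trans (hWV _))
end
end

section
/- Let d ≥ 2 and let I ⊆ ℝ be an open interval. Let m : ℝ → S^{d-1} and suppose V := sup { Σ_{i=0}^{k-1} (1/√2)·‖m(t_{i+1})⊗m(t_{i+1}) − m(t_i)⊗m(t_i)‖ : k ∈ ℕ, t_0 ≤ t_1 ≤ … ≤ t_k, all t_i ∈ I } < ∞, where ‖·‖ is the Frobenius norm on d×d matrices. Then there exists n : ℝ → S^{d-1} with n(t) ∈ {m(t), −m(t)} for all t ∈ I, such that sup { Σ_{i=0}^{k-1} ‖n(t_{i+1}) − n(t_i)‖_{ℝ^d} : k ∈ ℕ, t_0 ≤ t_1 ≤ … ≤ t_k, all t_i ∈ I } ≤ √2 · V. -/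
/-!
STATEMENT 3: One-dimensional Euclidean lifting with the optimal constant √2 for the
physical (tensorial) embedding `[n] ↦ (1/√2) n ⊗ n`: on an open interval `I ⊆ ℝ`, a map
of bounded tensorial pointwise variation admits a choice of signs `n` whose Euclidean
pointwise variation on `I` is at most `√2` times the tensorial variation.
-/

noncomputable section
open Real
open scoped ENNReal RealInnerProductSpace

/-- The Frobenius (Euclidean) norm of a `d × d` real matrix. -/
def frobNorm {d : ℕ} (A : Fin d → Fin d → ℝ) : ℝ := Real.sqrt (∑ i, ∑ j, (A i j) ^ 2)

/-- The tensor (outer) product `v ⊗ w` of two vectors, as a `d × d` matrix. -/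
def outer {d : ℕ} (v w : EuclideanSpace ℝ (Fin d)) : Fin d → Fin d → ℝ := fun i j => v i * w j

/-- The scaled tensor map as a Euclidean vector. -/
def tmap {d : ℕ} (v : EuclideanSpace ℝ (Fin d)) : EuclideanSpace ℝ (Fin d × Fin d) :=
  WithLp.toLp 2 (fun p => (1 / Real.sqrt 2) * (v p.1 * v p.2))

lemma dist_tmap {d : ℕ} (v w : EuclideanSpace ℝ (Fin d)) :
    dist (tmap v) (tmap w) = (1 / Real.sqrt 2) * frobNorm (outer v v - outer w w) := by
  have h : (0 : ℝ) ≤ 1 / Real.sqrt 2 := by positivity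
  rw [EuclideanSpace.dist_eq, frobNorm, ← Real.sqrt_sq h, ← Real.sqrt_mul (sq_nonneg _)]
  congr 1
  rw [Fintype.sum_prod_type, Finset.mul_sum]
  refine Finset.sum_congr rfl fun i _ => ?_
  rw [Finset.mul_sum]
  refine Finset.sum_congr rfl fun j _ => ?_
  rw [Real.dist_eq, sq_abs]
  simp only [tmap, outer, Pi.sub_apply]
  ring

lemma sq_dist_tmap {d : ℕ} (v w : EuclideanSpace ℝ (Fin d)) (hv : ‖v‖ = 1) (hw : ‖w‖ = 1) :
    (dist (tmap v) (tmap w)) ^ 2 = 1 - (inner ℝ v w) ^ 2 := by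
  have h1 : ∑ i, v i * v i = 1 := by
    have := EuclideanSpace.real_norm_sq_eq v
    rw [hv] at this
    simp only [← sq]; linarith
  have h2 : ∑ i, w i * w i = 1 := by
    have := EuclideanSpace.real_norm_sq_eq w
    rw [hw] at this
    simp only [← sq]; linarith
  have h3 : inner ℝ v w = ∑ i, v i * w i := by
    simp [PiLp.inner_apply, mul_comm]
  have e : ∀ i j, (v i * v j - w i * w j) ^ 2 =
      (v i * v i) * (v j * v j) + (w i * w i) * (w j * w j) - 2 * ((v i * w i) * (v j * w j)) := by
    intro i j; ring
  rw [dist_tmap, frobNorm, mul_pow, Real.sq_sqrt (by positivity), div_pow, Real.sq_sqrt (by norm_num)]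
  simp only [outer, Pi.sub_apply, e, Finset.sum_add_distrib, Finset.sum_sub_distrib,
    ← Finset.mul_sum, ← Finset.sum_mul, h1, h2, ← h3]
  ring

lemma edist_le_tmap {d : ℕ} (v w : EuclideanSpace ℝ (Fin d)) (hv : ‖v‖ = 1) (hw : ‖w‖ = 1)
    (h : 0 ≤ inner ℝ v w) :
    edist v w ≤ ENNReal.ofReal (Real.sqrt 2) * edist (tmap v) (tmap w) := by
  rw [edist_dist, edist_dist, ← ENNReal.ofReal_mul (Real.sqrt_nonneg _)]
  apply ENNReal.ofReal_le_ofReal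
  have h0 := sq_dist_tmap v w hv hw
  have h1 : (dist v w) ^ 2 = 2 - 2 * inner ℝ v w := by
    rw [dist_eq_norm, norm_sub_sq_real, hv, hw]; ring
  have h2 : inner ℝ v w ≤ 1 := by
    have := real_inner_le_norm v w
    rwa [hv, hw, mul_one] at this
  refine (sq_le_sq₀ dist_nonneg (by positivity)).1 ?_
  rw [mul_pow, Real.sq_sqrt (by norm_num), h0, h1]
  nlinarith

/-- Apply a sign. -/
def sgnv {d : ℕ} (b : Bool) (v : EuclideanSpace ℝ (Fin d)) : EuclideanSpace ℝ (Fin d) :=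
  if b then v else -v

lemma tmap_sgnv {d : ℕ} (b : Bool) (v : EuclideanSpace ℝ (Fin d)) : tmap (sgnv b v) = tmap v := by
  cases b <;> simp [tmap, sgnv]

lemma norm_sgnv {d : ℕ} (b : Bool) (v : EuclideanSpace ℝ (Fin d)) : ‖sgnv b v‖ = ‖v‖ := by
  cases b <;> simp [sgnv]

lemma exists_sgnv {d : ℕ} (v w : EuclideanSpace ℝ (Fin d)) : ∃ b, 0 ≤ inner ℝ v (sgnv b w) := by
  rcases le_total 0 (inner ℝ v w) with h | h
  · exact ⟨true, by simpa [sgnv] using h⟩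
  · exact ⟨false, by simpa [sgnv] using h⟩

lemma evar_le_of_edist {α E F : Type*} [LinearOrder α] [PseudoEMetricSpace E]
    [PseudoEMetricSpace F] (f : α → E) (g : α → F) (s : Set α) (C : ℝ≥0∞)
    (h : ∀ x ∈ s, ∀ y ∈ s, edist (f x) (f y) ≤ C * edist (g x) (g y)) :
    eVariationOn f s ≤ C * eVariationOn g s := by
  refine iSup_le fun p => ?_
  calc _ ≤ ∑ i ∈ Finset.range p.1, C * edist (g (p.2.1 (i + 1))) (g (p.2.1 i)) :=
        Finset.sum_le_sum fun i _ => h _ (p.2.2.2 _) _ (p.2.2.2 _)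
    _ = C * ∑ i ∈ Finset.range p.1, edist (g (p.2.1 (i + 1))) (g (p.2.1 i)) := by
        rw [Finset.mul_sum]
    _ ≤ _ := by
        gcongr
        exact le_iSup (fun p : ℕ × { u : ℕ → α // Monotone u ∧ ∀ i, u i ∈ s } =>
          ∑ i ∈ Finset.range p.1, edist (g (p.2.1 (i + 1))) (g (p.2.1 i))) p

lemma finite_lift_s3 {d : ℕ} (m : ℝ → EuclideanSpace ℝ (Fin d)) (hm : ∀ t, ‖m t‖ = 1)
    (F : Finset ℝ) : ∃ s : ℝ → Bool, eVariationOn (fun t => sgnv (s t) (m t)) (F : Set ℝ) ≤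
      ENNReal.ofReal (Real.sqrt 2) * eVariationOn (fun t => tmap (m t)) (F : Set ℝ) := by
  induction F using Finset.induction_on_max with
  | empty => exact ⟨fun _ => true, by simp⟩
  | insert a F ha ih =>
    obtain ⟨s, hs⟩ := ih
    rcases F.eq_empty_or_nonempty with rfl | hF
    · refine ⟨s, ?_⟩
      rw [eVariationOn.subsingleton _ (by simp)]
      exact zero_le
    obtain ⟨b, hb⟩ : ∃ b, b = F.max' hF := ⟨_, rfl⟩
    have hbF : b ∈ F := hb ▸ F.max'_mem hF
    have hba := ha b hbF
    obtain ⟨c, hc⟩ := exists_sgnv (sgnv (s b) (m b)) (m a)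
    refine ⟨Function.update s a c, ?_⟩
    have hset : ((insert a F : Finset ℝ) : Set ℝ) = (F : Set ℝ) ∪ {b, a} := by
      ext x; simp only [Finset.coe_insert, Set.mem_insert_iff, Finset.mem_coe, Set.mem_union,
        Set.mem_singleton_iff]
      constructor
      · tauto
      · rintro (h | rfl | h) <;> tauto
    have hG : IsGreatest (F : Set ℝ) b := hb ▸ F.isGreatest_max' hF
    have hL : IsLeast ({b, a} : Set ℝ) b := by
      refine ⟨by simp, ?_⟩
      rintro x (rfl | rfl)
      · exact le_rfl
      · exact hba.le
    rw [hset, eVariationOn.union _ hG hL, eVariationOn.union _ hG hL, mul_add]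
    refine add_le_add ?_ ?_
    · refine le_trans (le_of_eq (eVariationOn.eq_of_eqOn fun x hx => ?_)) hs
      have : x ≠ a := (ha x hx).ne
      simp [this]
    · apply evar_le_of_edist
      have key : edist (sgnv (s b) (m b)) (sgnv c (m a)) ≤
          ENNReal.ofReal (Real.sqrt 2) * edist (tmap (m b)) (tmap (m a)) := by
        have := edist_le_tmap _ _ (by rw [norm_sgnv, hm]) (by rw [norm_sgnv, hm]) hc
        rwa [tmap_sgnv, tmap_sgnv] at this
      rintro x (rfl | rfl) y (rfl | rfl)
      · simp
      · simpa [hba.ne] using key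
      · rw [edist_comm, edist_comm (tmap _)]
        simpa [hba.ne] using key
      · simp

lemma isClosed_evar {d : ℕ} (m : ℝ → EuclideanSpace ℝ (Fin d)) (F : Set ℝ) (C : ℝ≥0∞) :
    IsClosed {s : ℝ → Bool | eVariationOn (fun t => sgnv (s t) (m t)) F ≤ C} := by
  simp only [eVariationOn, iSup_le_iff, Set.ofPred_forall]
  refine isClosed_iInter fun p => isClosed_le ?_ continuous_const
  have hc : ∀ t, Continuous fun s : ℝ → Bool => sgnv (s t) (m t) := fun t =>
    (continuous_of_discreteTopology (f := fun b : Bool => sgnv b (m t))).comp (continuous_apply t)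
  exact continuous_finsetSum _ fun i _ => (hc _).edist (hc _)

theorem one_dim_euclidean_lifting
    (d : ℕ) (hd : 2 ≤ d)
    (I : Set ℝ) (hIopen : IsOpen I) (hIinterval : I.OrdConnected)
    (m : ℝ → EuclideanSpace ℝ (Fin d)) (hm : ∀ t, ‖m t‖ = 1)
    (V : ℝ≥0∞)
    (hV : V = ⨆ (k : ℕ) (t : ℕ → ℝ) (_ : Monotone t) (_ : ∀ i ≤ k, t i ∈ I),
      ∑ i ∈ Finset.range k, ENNReal.ofReal ((1 / Real.sqrt 2) *
        frobNorm (outer (m (t (i + 1))) (m (t (i + 1))) - outer (m (t i)) (m (t i)))))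
    (hVfin : V ≠ ⊤) :
    ∃ n : ℝ → EuclideanSpace ℝ (Fin d),
      (∀ t, ‖n t‖ = 1) ∧
      (∀ t ∈ I, n t = m t ∨ n t = -m t) ∧
      (⨆ (k : ℕ) (t : ℕ → ℝ) (_ : Monotone t) (_ : ∀ i ≤ k, t i ∈ I),
        ∑ i ∈ Finset.range k, ENNReal.ofReal ‖n (t (i + 1)) - n (t i)‖) ≤
      ENNReal.ofReal (Real.sqrt 2) * V := by
  have hTV : eVariationOn (fun t => tmap (m t)) I ≤ V := by
    rw [hV]
    refine iSup_le fun p => ?_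
    refine le_trans (le_of_eq ?_) (le_iSup_of_le p.1 (le_iSup_of_le p.2.1
      (le_iSup_of_le p.2.2.1 (le_iSup_of_le (fun i _ => p.2.2.2 i) le_rfl))))
    refine Finset.sum_congr rfl fun i _ => ?_
    rw [edist_dist, dist_tmap]
  let K : {F : Finset ℝ // (F : Set ℝ) ⊆ I} → Set (ℝ → Bool) := fun F =>
    {s | eVariationOn (fun t => sgnv (s t) (m t)) (F.1 : Set ℝ) ≤ ENNReal.ofReal (Real.sqrt 2) * V}
  have : Nonempty {F : Finset ℝ // (F : Set ℝ) ⊆ I} := ⟨⟨∅, by simp⟩⟩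
  have hK : (⋂ F, K F).Nonempty := by
    refine IsCompact.nonempty_iInter_of_directed_nonempty_isCompact_isClosed K ?_ ?_ ?_ ?_
    · intro F G
      refine ⟨⟨F.1 ∪ G.1, by simpa using ⟨F.2, G.2⟩⟩, ?_, ?_⟩
      · exact fun s hs => le_trans (eVariationOn.mono _ (by simp)) hs
      · exact fun s hs => le_trans (eVariationOn.mono _ (by simp)) hs
    · intro F
      obtain ⟨s, hs⟩ := finite_lift_s3 m hm F.1
      refine ⟨s, hs.trans ?_⟩
      gcongr
      exact (eVariationOn.mono _ F.2).trans hTV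
    · exact fun F => (isClosed_evar m _ _).isCompact
    · exact fun F => isClosed_evar m _ _
  obtain ⟨s, hs⟩ := hK
  refine ⟨fun t => sgnv (s t) (m t), fun t => by rw [norm_sgnv, hm], fun t _ => ?_, ?_⟩
  · cases h : s t <;> simp [sgnv, h]
  · refine iSup_le fun k => iSup_le fun t => iSup_le fun ht => iSup_le fun hI => ?_
    have hsF := Set.mem_iInter.1 hs ⟨(Finset.range (k + 1)).image t, by
      intro x hx
      simp only [Finset.coe_image, Set.mem_image, Finset.mem_coe, Finset.mem_range] at hx
      obtain ⟨i, hi, rfl⟩ := hx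
      exact hI i (by omega)⟩
    refine le_trans ?_ hsF
    simp only [← dist_eq_norm, ← edist_dist]
    refine eVariationOn.sum_le_of_monotoneOn_Iic (f := fun t => sgnv (s t) (m t))
      (ht.monotoneOn _) ?_
    intro i hi
    simp only [Finset.coe_image, Set.mem_image, Finset.mem_coe, Finset.mem_range]
    exact ⟨i, by omega, rfl⟩
end
end

section
/- Let d ≥ 2. For every measurable map n : Ω → S^{d-1} on an open set Ω ⊆ ℝ^N (N ≥ 1) and every measurable function ρ : (0,∞) → [0,∞), it holds (with all integrals valued in [0,∞]): ∫_{SO(d)} ∬_{Ω×Ω} arccos⟪F_R(n(x)), F_R(n(y))⟫ / |x−y| · ρ(|x−y|) dx dy dμ(R) ≤ 2 ∬_{Ω×Ω} min( arccos⟪n(x), n(y)⟫, π − arccos⟪n(x), n(y)⟫ ) / |x−y| · ρ(|x−y|) dx dy. -/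
/-!
STATEMENT 4: Lemma 3.1 of the paper: the averaging inequality over `SO(d)` for the
geodesic mollified energies of the liftings `F_R ∘ n`, where `F_R(x) = R⁻¹ F(Rx)` and
`F` flips a vector to the (closed) upper hemisphere. `μ` is the Haar probability measure
on `SO(d)`, formalized as any bi-invariant Borel probability measure.
-/

noncomputable section
open MeasureTheory Real Filter
open scoped ENNReal RealInnerProductSpace

instance {m n : Type*} : MeasurableSpace (Matrix m n ℝ) := MeasurableSpace.pi

/-- The special orthogonal group `SO(d)` as matrices. -/
abbrev SOd (d : ℕ) := Matrix.specialOrthogonalGroup (Fin d) ℝ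

/-- The last coordinate `⟪x, e_d⟫` of a vector `x ∈ ℝ^d`. -/
def lastCoord {d : ℕ} (x : EuclideanSpace ℝ (Fin d)) : ℝ :=
  if h : 0 < d then x ⟨d - 1, Nat.sub_lt h Nat.one_pos⟩ else 0

/-- `F : S^{d-1} → S^{d-1}`, `F(x) = x` if `⟪x, e_d⟫ ≥ 0` and `F(x) = -x` otherwise. -/
def Fsym {d : ℕ} (x : EuclideanSpace ℝ (Fin d)) : EuclideanSpace ℝ (Fin d) :=
  if 0 ≤ lastCoord x then x else -x

/-- Action of a matrix on `ℝ^d` (Euclidean space) by matrix-vector multiplication. -/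
def rotAct {d : ℕ} (R : Matrix (Fin d) (Fin d) ℝ) (x : EuclideanSpace ℝ (Fin d)) :
    EuclideanSpace ℝ (Fin d) :=
  (EuclideanSpace.equiv (Fin d) ℝ).symm (R.mulVec (EuclideanSpace.equiv (Fin d) ℝ x))

/-- Action of `R ∈ SO(d)` on `ℝ^d`. -/
def rot {d : ℕ} (R : SOd d) (x : EuclideanSpace ℝ (Fin d)) : EuclideanSpace ℝ (Fin d) :=
  rotAct (R : Matrix (Fin d) (Fin d) ℝ) x

/-- `F_R(x) = R⁻¹ F(Rx)` (for `R ∈ SO(d)`, `R⁻¹ = Rᵀ`). -/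
def FR {d : ℕ} (R : SOd d) (x : EuclideanSpace ℝ (Fin d)) : EuclideanSpace ℝ (Fin d) :=
  rotAct (Matrix.transpose (R : Matrix (Fin d) (Fin d) ℝ)) (Fsym (rot R x))

section AvgHelpers
variable {d : ℕ}

/-- The last coordinate of `R x`. -/
def Lc (R : SOd d) (x : EuclideanSpace ℝ (Fin d)) : ℝ := lastCoord (rot R x)

lemma rotAct_apply (A : Matrix (Fin d) (Fin d) ℝ) (x : EuclideanSpace ℝ (Fin d)) (i : Fin d) :
    rotAct A x i = ∑ j, A i j * x j := by
  simp [rotAct, Matrix.mulVec, dotProduct]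

lemma rotAct_mul (A B : Matrix (Fin d) (Fin d) ℝ) (x : EuclideanSpace ℝ (Fin d)) :
    rotAct (A * B) x = rotAct A (rotAct B x) := by
  unfold rotAct
  rw [ContinuousLinearEquiv.apply_symm_apply, Matrix.mulVec_mulVec]

lemma rotAct_one (x : EuclideanSpace ℝ (Fin d)) : rotAct 1 x = x := by
  simp [rotAct]

lemma rotAct_add (A : Matrix (Fin d) (Fin d) ℝ) (x y : EuclideanSpace ℝ (Fin d)) :
    rotAct A (x + y) = rotAct A x + rotAct A y := by
  simp [rotAct, Matrix.mulVec_add]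

lemma rotAct_smul (A : Matrix (Fin d) (Fin d) ℝ) (c : ℝ) (x : EuclideanSpace ℝ (Fin d)) :
    rotAct A (c • x) = c • rotAct A x := by
  simp [rotAct, Matrix.mulVec_smul]

lemma rotAct_neg (A : Matrix (Fin d) (Fin d) ℝ) (x : EuclideanSpace ℝ (Fin d)) :
    rotAct A (-x) = - rotAct A x := by
  simp [rotAct, Matrix.mulVec_neg]

lemma SOd_transpose_mul (R : SOd d) :
    (R : Matrix (Fin d) (Fin d) ℝ).transpose * (R : Matrix (Fin d) (Fin d) ℝ) = 1 := by
  have h := R.2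
  rw [Matrix.mem_specialOrthogonalGroup_iff] at h
  exact (Matrix.mem_orthogonalGroup_iff' (Fin d) ℝ).1 h.1

lemma SOd_mul_transpose (R : SOd d) :
    (R : Matrix (Fin d) (Fin d) ℝ) * (R : Matrix (Fin d) (Fin d) ℝ).transpose = 1 := by
  have h := R.2
  rw [Matrix.mem_specialOrthogonalGroup_iff] at h
  exact (Matrix.mem_orthogonalGroup_iff (Fin d) ℝ).1 h.1

lemma FR_eq (R : SOd d) (x : EuclideanSpace ℝ (Fin d)) :
    FR R x = if 0 ≤ Lc R x then x else -x := by
  unfold FR Fsym Lc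
  split_ifs
  · rw [rot, ← rotAct_mul, SOd_transpose_mul, rotAct_one]
  · rw [rotAct_neg, rot, ← rotAct_mul, SOd_transpose_mul, rotAct_one]

lemma Lc_eq (hd : 2 ≤ d) (R : SOd d) (x : EuclideanSpace ℝ (Fin d)) :
    Lc R x = rot R x ⟨d - 1, by omega⟩ := by
  unfold Lc lastCoord
  rw [dif_pos (by omega)]

lemma Lc_add (hd : 2 ≤ d) (R : SOd d) (x y : EuclideanSpace ℝ (Fin d)) :
    Lc R (x + y) = Lc R x + Lc R y := by
  simp [Lc_eq hd, rot, rotAct_add]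

lemma Lc_smul (hd : 2 ≤ d) (R : SOd d) (c : ℝ) (x : EuclideanSpace ℝ (Fin d)) :
    Lc R (c • x) = c * Lc R x := by
  simp [Lc_eq hd, rot, rotAct_smul]

lemma Lc_neg (hd : 2 ≤ d) (R : SOd d) (x : EuclideanSpace ℝ (Fin d)) :
    Lc R (-x) = - Lc R x := by
  simp [Lc_eq hd, rot, rotAct_neg]

lemma Lc_mul (R Q : SOd d) (x : EuclideanSpace ℝ (Fin d)) :
    Lc (R * Q) x = Lc R (rot Q x) := by
  simp [Lc, rot, rotAct_mul]

lemma Lc_ne (hd : 2 ≤ d) (R : SOd d) : ∃ x, Lc R x ≠ 0 := by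
  refine ⟨rotAct (Matrix.transpose (R : Matrix (Fin d) (Fin d) ℝ))
    (EuclideanSpace.single ⟨d - 1, by omega⟩ 1), ?_⟩
  rw [Lc_eq hd, rot, ← rotAct_mul, SOd_mul_transpose, rotAct_one]
  simp

lemma measurable_entry (i j : Fin d) :
    Measurable (fun R : SOd d => (R : Matrix (Fin d) (Fin d) ℝ) i j) :=
  (measurable_pi_apply j).comp ((measurable_pi_apply i).comp measurable_subtype_coe)

lemma measurable_Lc (hd : 2 ≤ d) :
    Measurable (fun p : SOd d × EuclideanSpace ℝ (Fin d) => Lc p.1 p.2) := by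
  simp only [Lc_eq hd, rot, rotAct_apply]
  refine Finset.measurable_sum _ fun j _ => ?_
  refine ((measurable_entry _ _).comp measurable_fst).mul ?_
  have : Measurable (fun x : EuclideanSpace ℝ (Fin d) => x j) := by fun_prop
  exact this.comp measurable_snd

lemma measurable_Lc_left (hd : 2 ≤ d) (x : EuclideanSpace ℝ (Fin d)) :
    Measurable (fun R : SOd d => Lc R x) :=
  (measurable_Lc hd).comp (measurable_id.prodMk measurable_const)

lemma measurable_FR (hd : 2 ≤ d) :
    Measurable (fun p : SOd d × EuclideanSpace ℝ (Fin d) => FR p.1 p.2) := by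
  simp only [FR_eq]
  exact Measurable.ite (measurableSet_le measurable_const (measurable_Lc hd))
    measurable_snd measurable_snd.neg

lemma measurable_FR_comp (hd : 2 ≤ d) {α : Type*} [MeasurableSpace α] {f : α → SOd d}
    {g : α → EuclideanSpace ℝ (Fin d)} (hf : Measurable f) (hg : Measurable g) :
    Measurable (fun a => FR (f a) (g a)) := by
  have h : Measurable (fun a => Lc (f a) (g a)) := by
    have h2 := (measurable_Lc hd).comp (hf.prodMk hg)
    simpa only [Function.comp_def] using h2
  simp only [FR_eq]
  exact Measurable.ite (measurableSet_le measurable_const h) hg hg.neg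

lemma measurable_mul_right_SOd (Q : SOd d) : Measurable (fun R : SOd d => R * Q) := by
  refine Measurable.subtype_mk (f := fun R : SOd d =>
    (R : Matrix (Fin d) (Fin d) ℝ) * (Q : Matrix (Fin d) (Fin d) ℝ)) ?_
  refine measurable_pi_lambda _ fun i => measurable_pi_lambda _ fun j => ?_
  simp only [Matrix.mul_apply]
  exact Finset.measurable_sum _ fun l _ => (measurable_entry _ _).mul_const _

/-- Invariance of the law of the last row. -/
lemma inv_pair (hd : 2 ≤ d) (μ : Measure (SOd d))
    (hμright : ∀ R₀ : SOd d, μ.map (fun R => R * R₀) = μ) (Q : SOd d)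
    (S : Set (ℝ × ℝ)) (hS : MeasurableSet S) (x y : EuclideanSpace ℝ (Fin d)) :
    μ {R | (Lc R (rot Q x), Lc R (rot Q y)) ∈ S} = μ {R | (Lc R x, Lc R y) ∈ S} := by
  have hm : MeasurableSet {R : SOd d | (Lc R x, Lc R y) ∈ S} :=
    ((measurable_Lc_left hd x).prodMk (measurable_Lc_left hd y)) hS
  conv_rhs => rw [← hμright Q, Measure.map_apply (measurable_mul_right_SOd Q) hm]
  simp [Set.preimage, Lc_mul]

/-- Rotation by `t` in the plane spanned by `a`, `b`. -/
def planeRot (a b : Fin d → ℝ) (t : ℝ) : Matrix (Fin d) (Fin d) ℝ :=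
  1 + (cos t - 1) • (Matrix.vecMulVec a a + Matrix.vecMulVec b b)
    + sin t • (Matrix.vecMulVec b a - Matrix.vecMulVec a b)

lemma planeRot_mul (a b : Fin d → ℝ) (ha : a ⬝ᵥ a = 1) (hb : b ⬝ᵥ b = 1) (hab : a ⬝ᵥ b = 0)
    (s t : ℝ) : planeRot a b s * planeRot a b t = planeRot a b (s + t) := by
  have hba : b ⬝ᵥ a = 0 := by rw [dotProduct_comm]; exact hab
  unfold planeRot
  rw [cos_add, sin_add]
  set P := Matrix.vecMulVec a a + Matrix.vecMulVec b b with hP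
  set J := Matrix.vecMulVec b a - Matrix.vecMulVec a b with hJ
  have h1 : P * P = P := by
    simp [hP, mul_add, add_mul, Matrix.vecMulVec_mul_vecMulVec, ha, hb, hab, hba]
  have h2 : P * J = J := by
    simp [hP, hJ, mul_sub, add_mul, Matrix.vecMulVec_mul_vecMulVec, ha, hb, hab, hba]
    try abel
  have h3 : J * P = J := by
    simp [hP, hJ, mul_add, sub_mul, Matrix.vecMulVec_mul_vecMulVec, ha, hb, hab, hba]
    try abel
  have h4 : J * J = -P := by
    simp [hP, hJ, mul_sub, sub_mul, Matrix.vecMulVec_mul_vecMulVec, ha, hb, hab, hba]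
    try abel
  simp only [mul_add, add_mul, smul_mul_assoc, mul_smul_comm, h1, h2, h3, h4, one_mul, mul_one]
  module

lemma planeRot_transpose (a b : Fin d → ℝ) (t : ℝ) :
    (planeRot a b t).transpose = planeRot a b (-t) := by
  unfold planeRot
  simp only [Matrix.transpose_add, Matrix.transpose_sub, Matrix.transpose_smul,
    Matrix.transpose_vecMulVec, Matrix.transpose_one, cos_neg, sin_neg]
  module

lemma planeRot_zero (a b : Fin d → ℝ) : planeRot a b 0 = 1 := by
  simp [planeRot]

lemma planeRot_mem (a b : Fin d → ℝ) (ha : a ⬝ᵥ a = 1) (hb : b ⬝ᵥ b = 1) (hab : a ⬝ᵥ b = 0)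
    (t : ℝ) : planeRot a b t ∈ Matrix.specialOrthogonalGroup (Fin d) ℝ := by
  have ho : ∀ s, planeRot a b s * (planeRot a b s).transpose = 1 := by
    intro s
    rw [planeRot_transpose, planeRot_mul a b ha hb hab, add_neg_cancel, planeRot_zero]
  rw [Matrix.mem_specialOrthogonalGroup_iff]
  refine ⟨(Matrix.mem_orthogonalGroup_iff (Fin d) ℝ).2 (ho t), ?_⟩
  have h := congrArg Matrix.det (ho (t / 2))
  rw [Matrix.det_mul, Matrix.det_transpose, Matrix.det_one] at h
  rw [← add_halves t, ← planeRot_mul a b ha hb hab, Matrix.det_mul, h]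

lemma exists_rot (n k : EuclideanSpace ℝ (Fin d)) (hn : ‖n‖ = 1) (hk : ‖k‖ = 1)
    (hnk : ⟪n, k⟫ = 0) (t : ℝ) :
    ∃ Q : SOd d, ∀ s : ℝ, rot Q (cos s • n + sin s • k) = cos (s + t) • n + sin (s + t) • k := by
  have key : ∀ x y : EuclideanSpace ℝ (Fin d), (x : Fin d → ℝ) ⬝ᵥ (y : Fin d → ℝ) = ⟪x, y⟫ := by
    intro x y
    simp [PiLp.inner_apply, dotProduct, mul_comm]
  have ha : (n : Fin d → ℝ) ⬝ᵥ (n : Fin d → ℝ) = 1 := by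
    rw [key, real_inner_self_eq_norm_sq, hn]; norm_num
  have hb : (k : Fin d → ℝ) ⬝ᵥ (k : Fin d → ℝ) = 1 := by
    rw [key, real_inner_self_eq_norm_sq, hk]; norm_num
  have hab : (n : Fin d → ℝ) ⬝ᵥ (k : Fin d → ℝ) = 0 := by rw [key, hnk]
  have hba : (k : Fin d → ℝ) ⬝ᵥ (n : Fin d → ℝ) = 0 := by rw [dotProduct_comm]; exact hab
  refine ⟨⟨planeRot n k t, planeRot_mem _ _ ha hb hab t⟩, fun s => ?_⟩
  have hcoe : ∀ x : EuclideanSpace ℝ (Fin d), EuclideanSpace.equiv (Fin d) ℝ x = x.ofLp :=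
    fun _ => rfl
  have e1 : rotAct (planeRot n k t) n = cos t • n + sin t • k := by
    ext i
    simp [rotAct, hcoe, planeRot, Matrix.add_mulVec, Matrix.sub_mulVec, Matrix.smul_mulVec,
      Matrix.vecMulVec_mulVec, ha, hba]
    ring
  have e2 : rotAct (planeRot n k t) k = -sin t • n + cos t • k := by
    ext i
    simp [rotAct, hcoe, planeRot, Matrix.add_mulVec, Matrix.sub_mulVec, Matrix.smul_mulVec,
      Matrix.vecMulVec_mulVec, hab, hb]
    ring
  rw [rot, rotAct_add, rotAct_smul, rotAct_smul, e1, e2, cos_add, sin_add]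
  module

lemma exists_frame (hd : 2 ≤ d) (x y : EuclideanSpace ℝ (Fin d)) (hx : ‖x‖ = 1) (hy : ‖y‖ = 1) :
    ∃ k : EuclideanSpace ℝ (Fin d), ‖k‖ = 1 ∧ ⟪x, k⟫ = 0 ∧
      y = cos (arccos ⟪x, y⟫) • x + sin (arccos ⟪x, y⟫) • k := by
  have hc : |⟪x, y⟫| ≤ 1 := by
    have := abs_real_inner_le_norm x y
    rwa [hx, hy, one_mul] at this
  rw [cos_arccos (neg_le_of_abs_le hc) (le_of_abs_le hc), sin_arccos]
  set c := ⟪x, y⟫ with hcdef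
  have hxx : ⟪x, x⟫ = 1 := by rw [real_inner_self_eq_norm_sq, hx]; norm_num
  have hyy : ⟪y, y⟫ = 1 := by rw [real_inner_self_eq_norm_sq, hy]; norm_num
  have hyx : ⟪y, x⟫ = c := by rw [real_inner_comm]
  have hnz : ‖y - c • x‖ ^ 2 = 1 - c ^ 2 := by
    rw [← real_inner_self_eq_norm_sq]
    simp only [inner_sub_left, inner_sub_right, real_inner_smul_left, real_inner_smul_right,
      hxx, hyy, hyx, ← hcdef]
    ring
  have hns : sqrt (1 - c ^ 2) = ‖y - c • x‖ := by
    rw [← hnz, sqrt_sq (norm_nonneg _)]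
  rw [hns]
  by_cases h0 : ‖y - c • x‖ = 0
  · have : ∃ k : EuclideanSpace ℝ (Fin d), ‖k‖ = 1 ∧ ⟪x, k⟫ = 0 := by
      have hrank : 1 < Module.finrank ℝ (EuclideanSpace ℝ (Fin d)) := by simp; omega
      obtain ⟨z, hz0, hz⟩ : ∃ z ∈ (ℝ ∙ x)ᗮ, z ≠ 0 := by
        apply Submodule.exists_mem_ne_zero_of_ne_bot
        intro hbot
        rw [Submodule.orthogonal_eq_bot_iff] at hbot
        have := finrank_span_singleton (K := ℝ) (v := x) (by intro h; simp [h] at hx)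
        rw [hbot, finrank_top] at this
        omega
      refine ⟨(‖z‖⁻¹ : ℝ) • z, ?_, ?_⟩
      · rw [norm_smul, norm_inv, norm_norm, inv_mul_cancel₀ (norm_ne_zero_iff.2 hz)]
      · rw [real_inner_smul_right, (Submodule.mem_orthogonal_singleton_iff_inner_right).1 hz0,
          mul_zero]
    obtain ⟨k, hk1, hk2⟩ := this
    refine ⟨k, hk1, hk2, ?_⟩
    have := norm_eq_zero.1 h0
    rw [h0, zero_smul, add_zero]
    exact sub_eq_zero.1 this
  · refine ⟨(‖y - c • x‖⁻¹ : ℝ) • (y - c • x), ?_, ?_, ?_⟩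
    · rw [norm_smul, norm_inv, norm_norm, inv_mul_cancel₀ h0]
    · rw [real_inner_smul_right, inner_sub_right, real_inner_smul_right, hxx, ← hcdef]
      simp
    · rw [smul_smul, mul_inv_cancel₀ h0, one_smul]; abel

lemma null_Lc (hd : 2 ≤ d) (μ : Measure (SOd d)) [IsProbabilityMeasure μ]
    (hμright : ∀ R₀ : SOd d, μ.map (fun R => R * R₀) = μ)
    (x : EuclideanSpace ℝ (Fin d)) (hx : ‖x‖ = 1) : μ {R | Lc R x = 0} = 0 := by
  set S : Set (SOd d × EuclideanSpace ℝ (Fin d)) := {p | Lc p.1 p.2 = 0} with hS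
  have hSm : MeasurableSet S := (measurable_Lc hd) (measurableSet_singleton 0)
  have h1 : (μ.prod volume) S = 0 := by
    rw [Measure.measure_prod_null hSm]
    refine Filter.Eventually.of_forall fun R => ?_
    let f : EuclideanSpace ℝ (Fin d) →ₗ[ℝ] ℝ :=
      { toFun := Lc R, map_add' := Lc_add hd R, map_smul' := fun c x => by simp [Lc_smul hd] }
    have : (Prod.mk R ⁻¹' S) = (LinearMap.ker f : Set (EuclideanSpace ℝ (Fin d))) := by
      ext y; simp [hS, f]
    simp only [Pi.zero_apply]
    rw [this]
    apply Measure.addHaar_submodule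
    intro htop
    obtain ⟨y, hy⟩ := Lc_ne hd R
    have : y ∈ LinearMap.ker f := by rw [htop]; trivial
    exact hy this
  have h2 : ∀ᵐ y ∂(volume : Measure (EuclideanSpace ℝ (Fin d))), μ {R | Lc R y = 0} = 0 := by
    have := Measure.measure_ae_null_of_prod_null (μ := (volume : Measure (EuclideanSpace ℝ (Fin d))))
      (ν := μ) (s := Prod.swap ⁻¹' S) (by
        rw [← Measure.prod_swap, Measure.map_apply measurable_swap hSm] at h1
        exact h1)
    exact this
  have : Nontrivial (EuclideanSpace ℝ (Fin d)) := ⟨x, 0, by intro h; simp [h] at hx⟩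
  have h3 : ∀ᵐ y ∂(volume : Measure (EuclideanSpace ℝ (Fin d))), y ≠ 0 := by
    simp [ae_iff]
  obtain ⟨y, hy, hy0⟩ := (h2.and h3).exists
  have hyn : ‖y‖ ≠ 0 := norm_ne_zero_iff.2 hy0
  set z := (‖y‖⁻¹ : ℝ) • y with hz
  have hz1 : ‖z‖ = 1 := by rw [hz, norm_smul, norm_inv, norm_norm, inv_mul_cancel₀ hyn]
  obtain ⟨k, hk1, hk2, hk3⟩ := exists_frame hd x z hx hz1
  obtain ⟨Q, hQ⟩ := exists_rot x k hx hk1 hk2 (arccos ⟪x, z⟫)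
  have hQ0 := hQ 0
  simp only [cos_zero, sin_zero, one_smul, zero_smul, add_zero, zero_add] at hQ0
  rw [← hk3] at hQ0
  have := inv_pair hd μ hμright Q {p | p.1 = 0} (measurable_fst (measurableSet_singleton 0)) x x
  simp only [Set.mem_ofPred_eq, hQ0] at this
  rw [← this, ← hy]
  congr 1
  ext R
  simp [hz, Lc_smul hd, hyn]

/-- A sinusoid has at most one sign change on a half period. -/
lemma one_change (A B θ : ℝ) (hθ : 0 ≤ θ) (K : ℕ) (hK : K * θ ≤ π) (i j : ℕ) (hij : i < j)
    (hj : j < K)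
    (hi : (A * cos (i * θ) + B * sin (i * θ)) *
      (A * cos ((i + 1) * θ) + B * sin ((i + 1) * θ)) < 0)
    (hj' : (A * cos (j * θ) + B * sin (j * θ)) *
      (A * cos ((j + 1) * θ) + B * sin ((j + 1) * θ)) < 0) : False := by
  set f : ℝ → ℝ := fun s => A * cos s + B * sin s with hf
  have hfc : Continuous f := by fun_prop
  have ivt : ∀ u v : ℝ, u ≤ v → f u * f v < 0 → ∃ s, u < s ∧ s < v ∧ f s = 0 := by
    intro u v huv h
    have : ∃ s ∈ Set.Icc u v, f s = 0 := by
      rcases mul_neg_iff.1 h with ⟨h1, h2⟩ | ⟨h1, h2⟩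
      · exact intermediate_value_Icc' huv hfc.continuousOn ⟨h2.le, h1.le⟩
      · exact intermediate_value_Icc huv hfc.continuousOn ⟨h1.le, h2.le⟩
    obtain ⟨s, ⟨hs1, hs2⟩, hs⟩ := this
    refine ⟨s, lt_of_le_of_ne hs1 ?_, lt_of_le_of_ne hs2 ?_, hs⟩
    · rintro rfl; simp [hs] at h
    · rintro rfl; simp [hs] at h
  obtain ⟨s, hs1, hs2, hs⟩ := ivt _ _ (by nlinarith) hi
  obtain ⟨t, ht1, ht2, ht⟩ := ivt _ _ (by nlinarith) hj'
  have c1 : ((i : ℝ) + 1) ≤ j := by exact_mod_cast hij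
  have c2 : ((j : ℝ) + 1) ≤ K := by exact_mod_cast hj
  have hst : s < t := by nlinarith
  have h0s : 0 < s := lt_of_le_of_lt (by positivity) hs1
  have htp : t < π := by nlinarith
  have hsin : 0 < sin (t - s) := sin_pos_of_pos_of_lt_pi (by linarith) (by linarith)
  simp only [hf] at hs ht
  rw [sin_sub] at hsin
  have hA : A * (sin t * cos s - cos t * sin s) = 0 := by linear_combination sin t * hs - sin s * ht
  have hB : B * (sin t * cos s - cos t * sin s) = 0 := by linear_combination cos s * ht - cos t * hs
  have hA0 := (mul_eq_zero.1 hA).resolve_right hsin.ne'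
  have hB0 := (mul_eq_zero.1 hB).resolve_right hsin.ne'
  simp [hA0, hB0] at hi

lemma prob_bound (hd : 2 ≤ d) (μ : Measure (SOd d)) [IsProbabilityMeasure μ]
    (hμright : ∀ R₀ : SOd d, μ.map (fun R => R * R₀) = μ)
    (x y : EuclideanSpace ℝ (Fin d)) (hx : ‖x‖ = 1) (hy : ‖y‖ = 1)
    (K : ℕ) (hK : K * arccos ⟪x, y⟫ ≤ π) :
    (K : ℝ≥0∞) * μ {R | Lc R x * Lc R y < 0} ≤ 1 := by
  obtain ⟨k, hk1, hk2, hk3⟩ := exists_frame hd x y hx hy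
  set θ := arccos ⟪x, y⟫ with hθ
  have hθ0 : 0 ≤ θ := arccos_nonneg _
  set u : ℝ → EuclideanSpace ℝ (Fin d) := fun s => cos s • x + sin s • k with hu
  set E : ℕ → Set (SOd d) := fun i => {R | Lc R (u (i * θ)) * Lc R (u ((i + 1) * θ)) < 0} with hE
  have hEm : ∀ i, MeasurableSet (E i) := fun i =>
    measurableSet_lt ((measurable_Lc_left hd _).mul (measurable_Lc_left hd _)) measurable_const
  have hEμ : ∀ i, μ (E i) = μ {R | Lc R x * Lc R y < 0} := by
    intro i
    obtain ⟨Q, hQ⟩ := exists_rot x k hx hk1 hk2 (i * θ)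
    have hQ0 := hQ 0
    have hQ1 := hQ θ
    rw [← hk3] at hQ1
    simp only [cos_zero, sin_zero, one_smul, zero_smul, add_zero, zero_add] at hQ0
    have := inv_pair hd μ hμright Q {p | p.1 * p.2 < 0}
      (measurableSet_lt (measurable_fst.mul measurable_snd) measurable_const) x y
    simp only [Set.mem_ofPred_eq, hQ0, hQ1] at this
    rw [← this]
    simp only [hE, hu]
    have e : ((i : ℝ) + 1) * θ = θ + i * θ := by ring
    rw [e]
  have hdisj : Set.PairwiseDisjoint (↑(Finset.range K)) E := by
    have main : ∀ i j : ℕ, i < j → j < K → Disjoint (E i) (E j) := by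
      intro i j hij hj
      rw [Set.disjoint_left]
      intro R hi hj'
      simp only [hE, hu, Set.mem_ofPred_eq, Lc_add hd, Lc_smul hd] at hi hj'
      apply one_change (Lc R x) (Lc R k) θ hθ0 K hK i j hij hj
      · convert hi using 1; ring
      · convert hj' using 1; ring
    intro i hi j hj hij
    simp only [Finset.coe_range, Set.mem_Iio] at hi hj
    rcases lt_or_gt_of_ne hij with h | h
    · exact main i j h hj
    · exact (main j i h hi).symm
  have := measure_biUnion_finset (μ := μ) hdisj (fun i _ => hEm i)
  simp only [hEμ, Finset.sum_const, Finset.card_range, nsmul_eq_mul] at this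
  rw [← this]
  exact prob_le_one

lemma inner_FR_ae (hd : 2 ≤ d) (μ : Measure (SOd d)) [IsProbabilityMeasure μ]
    (hμright : ∀ R₀ : SOd d, μ.map (fun R => R * R₀) = μ)
    (x y : EuclideanSpace ℝ (Fin d)) (hx : ‖x‖ = 1) (hy : ‖y‖ = 1) :
    ∀ᵐ R ∂μ, ⟪FR R x, FR R y⟫ = if Lc R x * Lc R y < 0 then -⟪x, y⟫ else ⟪x, y⟫ := by
  have h1 : ∀ᵐ R ∂μ, Lc R x ≠ 0 := by
    rw [ae_iff]; simpa using null_Lc hd μ hμright x hx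
  have h2 : ∀ᵐ R ∂μ, Lc R y ≠ 0 := by
    rw [ae_iff]; simpa using null_Lc hd μ hμright y hy
  filter_upwards [h1, h2] with R h1 h2
  rw [FR_eq, FR_eq]
  rcases lt_or_gt_of_ne h1 with a | a <;> rcases lt_or_gt_of_ne h2 with b | b
  · rw [if_neg a.not_ge, if_neg b.not_ge, if_neg (mul_pos_of_neg_of_neg a b).not_gt]; simp
  · rw [if_neg a.not_ge, if_pos b.le, if_pos (mul_neg_of_neg_of_pos a b)]; simp
  · rw [if_pos a.le, if_neg b.not_ge, if_pos (mul_neg_of_pos_of_neg a b)]; simp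
  · rw [if_pos a.le, if_pos b.le, if_neg (mul_pos a b).not_gt]

lemma key_acute (hd : 2 ≤ d) (μ : Measure (SOd d)) [IsProbabilityMeasure μ]
    (hμright : ∀ R₀ : SOd d, μ.map (fun R => R * R₀) = μ)
    (x y : EuclideanSpace ℝ (Fin d)) (hx : ‖x‖ = 1) (hy : ‖y‖ = 1)
    (hθ : arccos ⟪x, y⟫ ≤ π / 2) :
    ∫⁻ R, ENNReal.ofReal (arccos ⟪FR R x, FR R y⟫) ∂μ ≤ 2 * ENNReal.ofReal (arccos ⟪x, y⟫) := by
  set θ := arccos ⟪x, y⟫ with hθdef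
  have hθ0 : 0 ≤ θ := arccos_nonneg _
  set D : Set (SOd d) := {R | Lc R x * Lc R y < 0} with hD
  have hDm : MeasurableSet D :=
    measurableSet_lt ((measurable_Lc_left hd _).mul (measurable_Lc_left hd _)) measurable_const
  have hle : ∫⁻ R, ENNReal.ofReal (arccos ⟪FR R x, FR R y⟫) ∂μ ≤
      ∫⁻ R, (ENNReal.ofReal θ + D.indicator (fun _ => ENNReal.ofReal (π - 2 * θ)) R) ∂μ := by
    apply lintegral_mono_ae
    filter_upwards [inner_FR_ae hd μ hμright x y hx hy] with R hR
    rw [hR]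
    split_ifs with h
    · rw [Set.indicator_of_mem (show R ∈ D from h), arccos_neg, ← hθdef,
        ← ENNReal.ofReal_add hθ0 (by linarith)]
      apply ENNReal.ofReal_le_ofReal; linarith
    · exact le_self_add
  refine hle.trans ?_
  rw [lintegral_add_left measurable_const, lintegral_indicator_const hDm, lintegral_const,
    measure_univ, mul_one, two_mul (ENNReal.ofReal θ)]
  gcongr
  rcases hθ0.eq_or_lt with h0 | hpos
  · have hxy : x = y := by
      have h1 : 1 ≤ ⟪x, y⟫ := arccos_eq_zero.1 (by rw [← hθdef, ← h0])
      have h2 : ⟪x, y⟫ = 1 := le_antisymm (by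
        have := real_inner_le_norm x y
        rwa [hx, hy, one_mul] at this) h1
      exact (inner_eq_one_iff_of_norm_eq_one hx hy).1 h2
    have : D = ∅ := by
      ext R
      simp only [hD, hxy, Set.mem_ofPred_eq, Set.mem_empty_iff_false, iff_false, not_lt]
      exact mul_self_nonneg _
    simp [this]
  · set K := ⌊π / θ⌋₊ with hKdef
    have hK1 : K * θ ≤ π := by
      have := Nat.floor_le (a := π / θ) (by positivity)
      rwa [le_div_iff₀ hpos] at this
    have hK2 : π < (K + 1) * θ := by
      have := Nat.lt_floor_add_one (π / θ)
      rwa [div_lt_iff₀ hpos] at this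
    have hp := prob_bound hd μ hμright x y hx hy K hK1
    calc ENNReal.ofReal (π - 2 * θ) * μ D
        ≤ ENNReal.ofReal (K * θ) * μ D := by
          gcongr; nlinarith
      _ = ENNReal.ofReal θ * (K * μ D) := by
          rw [ENNReal.ofReal_mul (by positivity), ENNReal.ofReal_natCast]; ring
      _ ≤ ENNReal.ofReal θ * 1 := by gcongr
      _ = ENNReal.ofReal θ := mul_one _

lemma key_ineq (hd : 2 ≤ d) (μ : Measure (SOd d)) [IsProbabilityMeasure μ]
    (hμright : ∀ R₀ : SOd d, μ.map (fun R => R * R₀) = μ)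
    (x y : EuclideanSpace ℝ (Fin d)) (hx : ‖x‖ = 1) (hy : ‖y‖ = 1) :
    ∫⁻ R, ENNReal.ofReal (arccos ⟪FR R x, FR R y⟫) ∂μ ≤
      2 * ENNReal.ofReal (min (arccos ⟪x, y⟫) (π - arccos ⟪x, y⟫)) := by
  rcases le_total (arccos ⟪x, y⟫) (π / 2) with h | h
  · rw [min_eq_left (by linarith)]
    exact key_acute hd μ hμright x y hx hy h
  · rw [min_eq_right (by linarith)]
    have h' : arccos ⟪x, -y⟫ = π - arccos ⟪x, y⟫ := by rw [inner_neg_right, arccos_neg]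
    rw [← h']
    refine le_trans (le_of_eq ?_)
      (key_acute hd μ hμright x (-y) hx (by rwa [norm_neg]) (by rw [h']; linarith))
    apply lintegral_congr_ae
    have h2 : ∀ᵐ R ∂μ, Lc R y ≠ 0 := by
      rw [ae_iff]; simpa using null_Lc hd μ hμright y hy
    filter_upwards [h2] with R h2
    have : FR R (-y) = FR R y := by
      rw [FR_eq, FR_eq, Lc_neg hd]
      rcases lt_or_gt_of_ne h2 with b | b
      · rw [if_neg b.not_ge, if_pos (by linarith)]
      · rw [if_pos b.le, if_neg (by linarith), neg_neg]
    rw [this]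

end AvgHelpers

theorem averaging_inequality_geodesic
    (N d : ℕ) (hN : 1 ≤ N) (hd : 2 ≤ d)
    (μ : Measure (SOd d)) [IsProbabilityMeasure μ]
    (hμleft : ∀ R₀ : SOd d, μ.map (fun R => R₀ * R) = μ)
    (hμright : ∀ R₀ : SOd d, μ.map (fun R => R * R₀) = μ)
    (Ω : Set (EuclideanSpace ℝ (Fin N))) (hΩ : IsOpen Ω)
    (n : EuclideanSpace ℝ (Fin N) → EuclideanSpace ℝ (Fin d))
    (hnmeas : Measurable n) (hnsph : ∀ x, ‖n x‖ = 1)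
    (ρ : ℝ → ℝ) (hρmeas : Measurable ρ) (hρnonneg : ∀ r > (0 : ℝ), 0 ≤ ρ r) :
    ∫⁻ R, (∫⁻ x in Ω, ∫⁻ y in Ω, ENNReal.ofReal
        (Real.arccos ⟪FR R (n x), FR R (n y)⟫ / ‖x - y‖ * ρ ‖x - y‖)) ∂μ ≤
    2 * ∫⁻ x in Ω, ∫⁻ y in Ω, ENNReal.ofReal
        (min (Real.arccos ⟪n x, n y⟫) (π - Real.arccos ⟪n x, n y⟫) / ‖x - y‖ * ρ ‖x - y‖) := by
  have hFRm : Measurable (fun p : (SOd d × EuclideanSpace ℝ (Fin N)) × EuclideanSpace ℝ (Fin N) =>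
      ENNReal.ofReal (Real.arccos ⟪FR p.1.1 (n p.1.2), FR p.1.1 (n p.2)⟫ / ‖p.1.2 - p.2‖ *
        ρ ‖p.1.2 - p.2‖)) := by
    have m1 : Measurable (fun p : (SOd d × EuclideanSpace ℝ (Fin N)) × EuclideanSpace ℝ (Fin N) =>
        FR p.1.1 (n p.1.2)) :=
      measurable_FR_comp hd (measurable_fst.comp measurable_fst)
        (hnmeas.comp (measurable_snd.comp measurable_fst))
    have m2 : Measurable (fun p : (SOd d × EuclideanSpace ℝ (Fin N)) × EuclideanSpace ℝ (Fin N) =>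
        FR p.1.1 (n p.2)) :=
      measurable_FR_comp hd (measurable_fst.comp measurable_fst) (hnmeas.comp measurable_snd)
    have m3 : Measurable (fun p : (SOd d × EuclideanSpace ℝ (Fin N)) × EuclideanSpace ℝ (Fin N) =>
        ‖p.1.2 - p.2‖) := ((measurable_snd.comp measurable_fst).sub measurable_snd).norm
    have m4 := Measurable.inner (𝕜 := ℝ) m1 m2
    have m5 := continuous_arccos.measurable.comp m4
    have m6 := hρmeas.comp m3
    exact ((m5.div m3).mul m6).ennreal_ofReal
  have hswap1 : ∫⁻ R, (∫⁻ x in Ω, ∫⁻ y in Ω, ENNReal.ofReal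
        (Real.arccos ⟪FR R (n x), FR R (n y)⟫ / ‖x - y‖ * ρ ‖x - y‖)) ∂μ =
      ∫⁻ x in Ω, ∫⁻ R, (∫⁻ y in Ω, ENNReal.ofReal
        (Real.arccos ⟪FR R (n x), FR R (n y)⟫ / ‖x - y‖ * ρ ‖x - y‖)) ∂μ :=
    lintegral_lintegral_swap (hFRm.lintegral_prod_right' (ν := volume.restrict Ω)).aemeasurable
  rw [hswap1, ← lintegral_const_mul' _ _ (by norm_num)]
  apply lintegral_mono
  intro x
  simp only
  have hswap2 : ∫⁻ R, (∫⁻ y in Ω, ENNReal.ofReal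
        (Real.arccos ⟪FR R (n x), FR R (n y)⟫ / ‖x - y‖ * ρ ‖x - y‖)) ∂μ =
      ∫⁻ y in Ω, ∫⁻ R, ENNReal.ofReal
        (Real.arccos ⟪FR R (n x), FR R (n y)⟫ / ‖x - y‖ * ρ ‖x - y‖) ∂μ := by
    apply lintegral_lintegral_swap
    exact (hFRm.comp ((measurable_fst.prodMk measurable_const).prodMk measurable_snd)).aemeasurable
  rw [hswap2, ← lintegral_const_mul' _ _ (by norm_num)]
  apply lintegral_mono
  intro y
  simp only
  by_cases hxy : x = y
  · simp [hxy]
  have hpos : 0 < ‖x - y‖ := norm_pos_iff.2 (sub_ne_zero.2 hxy)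
  have hc : 0 ≤ ρ ‖x - y‖ / ‖x - y‖ := div_nonneg (hρnonneg _ hpos) hpos.le
  have e : ∀ a : ℝ, ENNReal.ofReal (a / ‖x - y‖ * ρ ‖x - y‖) =
      ENNReal.ofReal (ρ ‖x - y‖ / ‖x - y‖) * ENNReal.ofReal a := by
    intro a
    rw [← ENNReal.ofReal_mul hc]
    congr 1; ring
  simp only [e]
  rw [lintegral_const_mul' _ _ ENNReal.ofReal_ne_top, mul_left_comm]
  gcongr
  exact key_ineq hd μ hμright (n x) (n y) (hnsph x) (hnsph y)
end
end

section
/- Let d ≥ 2. For all n, m ∈ S^{d-1}, setting θ = arccos⟪n, m⟫ ∈ [0, π], it holds ∫_{SO(d)} arccos⟪F(Rn), F(Rm)⟫ dμ(R) = (2/π) · θ · (π − θ). -/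
noncomputable section
open MeasureTheory Real Filter
open scoped ENNReal RealInnerProductSpace

/-!
STATEMENT 5 (Lemma 3.2 of the paper): for the Haar probability measure μ on SO(d)
(formalized as any bi-invariant Borel probability measure) and unit vectors n, m,
∫ arccos⟪F(Rn), F(Rm)⟫ dμ(R) = (2/π)·θ·(π−θ) with θ = arccos⟪n, m⟫.
-/

open Matrix in
def gMat {d : ℕ} (u w : Fin d → ℝ) (t : ℝ) : Matrix (Fin d) (Fin d) ℝ :=
  1 + (cos t - 1) • (vecMulVec u u + vecMulVec w w) + sin t • (vecMulVec w u - vecMulVec u w)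

section
open Matrix
variable {d : ℕ} {u w : Fin d → ℝ}

lemma gMat_mul (hu : u ⬝ᵥ u = 1) (hw : w ⬝ᵥ w = 1) (huw : u ⬝ᵥ w = 0) (a b : ℝ) :
    gMat u w a * gMat u w b = gMat u w (a + b) := by
  have hwu : w ⬝ᵥ u = 0 := by rw [dotProduct_comm]; exact huw
  have hPP : (vecMulVec u u + vecMulVec w w) * (vecMulVec u u + vecMulVec w w)
      = vecMulVec u u + vecMulVec w w := by
    simp [mul_add, add_mul, vecMulVec_mul_vecMulVec, hu, hw, huw, hwu]
  have hPJ : (vecMulVec u u + vecMulVec w w) * (vecMulVec w u - vecMulVec u w)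
      = vecMulVec w u - vecMulVec u w := by
    simp [mul_sub, add_mul, vecMulVec_mul_vecMulVec, hu, hw, huw, hwu]
    try abel
  have hJP : (vecMulVec w u - vecMulVec u w) * (vecMulVec u u + vecMulVec w w)
      = vecMulVec w u - vecMulVec u w := by
    simp [mul_add, sub_mul, vecMulVec_mul_vecMulVec, hu, hw, huw, hwu]
    try abel
  have hJJ : (vecMulVec w u - vecMulVec u w) * (vecMulVec w u - vecMulVec u w)
      = - (vecMulVec u u + vecMulVec w w) := by
    simp [mul_sub, sub_mul, vecMulVec_mul_vecMulVec, hu, hw, huw, hwu]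
    try abel
  unfold gMat
  generalize vecMulVec u u + vecMulVec w w = P at *
  generalize vecMulVec w u - vecMulVec u w = J at *
  simp only [mul_add, add_mul, smul_mul_assoc, mul_smul_comm, hPP, hPJ, hJP, hJJ, mul_one, one_mul,
    cos_add, sin_add]
  module

lemma gMat_zero : gMat u w 0 = 1 := by simp [gMat]

lemma gMat_transpose (t : ℝ) : (gMat u w t)ᵀ = gMat u w (-t) := by
  simp only [gMat, transpose_add, transpose_smul, transpose_sub, transpose_vecMulVec, transpose_one,
    cos_neg, sin_neg]
  module

lemma gMat_mem (hu : u ⬝ᵥ u = 1) (hw : w ⬝ᵥ w = 1) (huw : u ⬝ᵥ w = 0) (t : ℝ) :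
    gMat u w t ∈ specialOrthogonalGroup (Fin d) ℝ := by
  have h1 : ∀ s, gMat u w s * (gMat u w s)ᵀ = 1 := by
    intro s
    rw [gMat_transpose, gMat_mul hu hw huw, add_neg_cancel, gMat_zero]
  rw [mem_specialOrthogonalGroup_iff]
  refine ⟨(mem_orthogonalGroup_iff (Fin d) ℝ).2 (h1 t), ?_⟩
  have h2 := congrArg det (h1 (t/2))
  rw [det_mul, det_transpose, det_one] at h2
  rw [← add_halves t, ← gMat_mul hu hw huw, det_mul, h2]

lemma gMat_mulVec_left (hu : u ⬝ᵥ u = 1) (huw : u ⬝ᵥ w = 0) (t : ℝ) :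
    gMat u w t *ᵥ u = cos t • u + sin t • w := by
  have hwu : w ⬝ᵥ u = 0 := by rw [dotProduct_comm]; exact huw
  simp [gMat, add_mulVec, sub_mulVec, smul_mulVec, vecMulVec_mulVec, hu, hwu]
  module

lemma gMat_mulVec_right (hw : w ⬝ᵥ w = 1) (huw : u ⬝ᵥ w = 0) (t : ℝ) :
    gMat u w t *ᵥ w = (-sin t) • u + cos t • w := by
  simp [gMat, add_mulVec, sub_mulVec, smul_mulVec, vecMulVec_mulVec, hw, huw]
  module

lemma meas_row (i : Fin d) (u : Fin d → ℝ) : Measurable (fun R : SOd d => R.1 i ⬝ᵥ u) := by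
  have h : ∀ j, Measurable (fun R : SOd d => R.1 i j) := fun j =>
    (measurable_pi_apply j).comp ((measurable_pi_apply i).comp measurable_subtype_coe)
  unfold dotProduct
  exact Finset.measurable_sum _ fun j _ => (h j).mul_const _

lemma meas_mul (G : SOd d) : Measurable (fun R : SOd d => R * G) := by
  refine Measurable.subtype_mk ?_
  refine measurable_pi_iff.2 fun i => measurable_pi_iff.2 fun j => ?_
  exact meas_row i (fun k => G.1 k j)

lemma avg (μ : Measure (SOd d)) [IsProbabilityMeasure μ]
    (hμright : ∀ R₀ : SOd d, μ.map (fun R => R * R₀) = μ)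
    (i : Fin d) (hu : u ⬝ᵥ u = 1) (hw : w ⬝ᵥ w = 1) (huw : u ⬝ᵥ w = 0)
    (h : ℝ → ℝ → ℝ) (hm : Measurable (Function.uncurry h)) (K : ℝ) (hK : ∀ a b, |h a b| ≤ K) (C : ℝ)
    (hC : ∀ᵐ R ∂μ, ∫ t in (0:ℝ)..(2*π), h (cos t * (R.1 i ⬝ᵥ u) + sin t * (R.1 i ⬝ᵥ w))
      (-sin t * (R.1 i ⬝ᵥ u) + cos t * (R.1 i ⬝ᵥ w)) = 2 * π * C) :
    ∫ R, h (R.1 i ⬝ᵥ u) (R.1 i ⬝ᵥ w) ∂μ = C := by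
  have hpi : (0:ℝ) ≤ 2 * π := by positivity
  have mm : ∀ {β : Type} [MeasurableSpace β] {f g : β → ℝ}, Measurable f → Measurable g →
      Measurable (fun x => h (f x) (g x)) := fun hf hg => hm.comp (hf.prodMk hg)
  have key : ∀ t : ℝ, ∫ R, h (cos t * (R.1 i ⬝ᵥ u) + sin t * (R.1 i ⬝ᵥ w))
      (-sin t * (R.1 i ⬝ᵥ u) + cos t * (R.1 i ⬝ᵥ w)) ∂μ = ∫ R, h (R.1 i ⬝ᵥ u) (R.1 i ⬝ᵥ w) ∂μ := by
    intro t
    let G : SOd d := ⟨gMat u w t, gMat_mem hu hw huw t⟩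
    conv_rhs => rw [← hμright G]
    rw [integral_map (meas_mul G).aemeasurable
      (mm (meas_row i u) (meas_row i w)).aestronglyMeasurable]
    refine integral_congr_ae (Eventually.of_forall fun R => ?_)
    have e : ∀ x : Fin d → ℝ, (R * G).1 i ⬝ᵥ x = R.1 i ⬝ᵥ (gMat u w t *ᵥ x) := by
      intro x
      exact (congrFun (mulVec_mulVec x R.1 (gMat u w t)) i).symm
    simp only [e, gMat_mulVec_left hu huw, gMat_mulVec_right hw huw, dotProduct_add,
      dotProduct_smul, smul_eq_mul]
  have hswap := integral_integral_swap (μ := volume.restrict (Set.Ioc (0:ℝ) (2*π))) (ν := μ)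
    (f := fun t R => h (cos t * (R.1 i ⬝ᵥ u) + sin t * (R.1 i ⬝ᵥ w))
      (-sin t * (R.1 i ⬝ᵥ u) + cos t * (R.1 i ⬝ᵥ w))) (by
      refine Integrable.of_bound (Measurable.aestronglyMeasurable ?_) K
        (Eventually.of_forall fun x => hK _ _)
      have h1 := (meas_row i u).comp (measurable_snd : Measurable (Prod.snd : ℝ × SOd d → SOd d))
      have h2 := (meas_row i w).comp (measurable_snd : Measurable (Prod.snd : ℝ × SOd d → SOd d))
      have h3 : Measurable (fun x : ℝ × SOd d => cos x.1) := measurable_cos.comp measurable_fst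
      have h4 : Measurable (fun x : ℝ × SOd d => sin x.1) := measurable_sin.comp measurable_fst
      exact mm ((h3.mul h1).add (h4.mul h2)) ((h4.neg.mul h1).add (h3.mul h2)))
  simp only [key] at hswap
  simp only [intervalIntegral.integral_of_le hpi] at hC
  rw [integral_congr_ae hC] at hswap
  have := pi_pos
  simp [pi_pos.le] at hswap
  exact hswap
end

def hfun (θ a b : ℝ) : ℝ := if (0 ≤ a ↔ 0 ≤ cos θ * a + sin θ * b) then θ else π - θ

lemma hfun_meas (θ : ℝ) : Measurable (Function.uncurry (hfun θ)) := by
  unfold hfun Function.uncurry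
  refine Measurable.ite ?_ measurable_const measurable_const
  have h1 : MeasurableSet {p : ℝ × ℝ | 0 ≤ p.1} := measurableSet_le measurable_const measurable_fst
  have h2 : MeasurableSet {p : ℝ × ℝ | 0 ≤ cos θ * p.1 + sin θ * p.2} :=
    measurableSet_le measurable_const (by fun_prop)
  exact h1.iff h2

lemma hfun_bound {θ : ℝ} (h0 : 0 ≤ θ) (h1 : θ ≤ π) (a b : ℝ) : |hfun θ a b| ≤ π := by
  unfold hfun
  split_ifs <;> rw [abs_of_nonneg (by linarith)] <;> linarith

lemma polar (A B : ℝ) : ∃ r α : ℝ, 0 ≤ r ∧ A = r * cos α ∧ B = r * sin α := by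
  refine ⟨‖(⟨A, B⟩ : ℂ)‖, Complex.arg ⟨A, B⟩, norm_nonneg _, ?_, ?_⟩
  · rw [Complex.norm_mul_cos_arg]
  · rw [Complex.norm_mul_sin_arg]

lemma base_int {θ : ℝ} (h0 : 0 ≤ θ) (h1 : θ ≤ π) :
    ∫ t in (-(π/2))..(-(π/2) + 2*π), (if (0 ≤ cos t ↔ 0 ≤ cos (t + θ)) then θ else π - θ)
      = 4 * (θ * (π - θ)) := by
  have hp := pi_pos
  set f : ℝ → ℝ := fun t => (if (0 ≤ cos t ↔ 0 ≤ cos (t + θ)) then θ else π - θ) with hf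
  have hfm : Measurable f := by
    refine Measurable.ite ?_ measurable_const measurable_const
    have h1 : MeasurableSet {t : ℝ | 0 ≤ cos t} :=
      measurableSet_le measurable_const (by fun_prop)
    have h2 : MeasurableSet {t : ℝ | 0 ≤ cos (t + θ)} :=
      measurableSet_le measurable_const (by fun_prop)
    exact h1.iff h2
  have hi : ∀ a b, IntervalIntegrable f volume a b := by
    intro a b
    refine (intervalIntegrable_const (c := π)).mono_fun hfm.aestronglyMeasurable
      (Eventually.of_forall fun t => ?_)
    simp only [hf, norm_eq_abs]
    split_ifs <;> rw [abs_of_nonneg (by linarith), abs_of_nonneg (by linarith)] <;> linarith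
  have hpos : ∀ x, -(π/2) < x → x < π/2 → 0 ≤ cos x := fun x a b =>
    (cos_pos_of_mem_Ioo ⟨a, b⟩).le
  have hneg : ∀ x, π/2 < x → x < π + π/2 → ¬ 0 ≤ cos x := fun x a b =>
    not_le.2 (cos_neg_of_pi_div_two_lt_of_lt a b)
  have hpos2 : ∀ x, π + π/2 < x → x < 2*π + π/2 → 0 ≤ cos x := fun x a b => by
    rw [← cos_sub_two_pi]; exact hpos _ (by linarith) (by linarith)
  have i1 : ∫ t in (-(π/2))..(π/2 - θ), f t = (π - θ) * θ := by
    rw [intervalIntegral.integral_congr_Ioo_of_le (g := fun _ => θ) (by linarith)]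
    · simp; left; ring
    · rintro t ⟨ha, hb⟩
      have a1 := hpos t (by linarith) (by linarith)
      have a2 := hpos (t+θ) (by linarith) (by linarith)
      simp [hf, a1, a2]
  have i2 : ∫ t in (π/2 - θ)..(π/2), f t = θ * (π - θ) := by
    rw [intervalIntegral.integral_congr_Ioo_of_le (g := fun _ => π - θ) (by linarith)]
    · simp; ring
    · rintro t ⟨ha, hb⟩
      have a1 := hpos t (by linarith) (by linarith)
      have a2 := hneg (t+θ) (by linarith) (by linarith)
      simp only [hf, a1, a2]; simp
  have i3 : ∫ t in (π/2)..(π + π/2 - θ), f t = (π - θ) * θ := by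
    rw [intervalIntegral.integral_congr_Ioo_of_le (g := fun _ => θ) (by linarith)]
    · simp; left; ring
    · rintro t ⟨ha, hb⟩
      have a1 := hneg t (by linarith) (by linarith)
      have a2 := hneg (t+θ) (by linarith) (by linarith)
      simp only [hf, a1, a2]; simp
  have i4 : ∫ t in (π + π/2 - θ)..(-(π/2) + 2*π), f t = θ * (π - θ) := by
    rw [intervalIntegral.integral_congr_Ioo_of_le (g := fun _ => π - θ) (by linarith)]
    · simp; ring
    · rintro t ⟨ha, hb⟩
      have a1 := hneg t (by linarith) (by linarith)
      have a2 := hpos2 (t+θ) (by linarith) (by linarith)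
      simp only [hf, a1, a2]; simp
  have j1 := intervalIntegral.integral_add_adjacent_intervals
    (hi (-(π/2)) (π/2-θ)) (hi (π/2-θ) (π/2))
  have j2 := intervalIntegral.integral_add_adjacent_intervals
    (hi (-(π/2)) (π/2)) (hi (π/2) (π+π/2-θ))
  have j3 := intervalIntegral.integral_add_adjacent_intervals
    (hi (-(π/2)) (π+π/2-θ)) (hi (π+π/2-θ) (-(π/2) + 2*π))
  rw [← j3, ← j2, ← j1, i1, i2, i3, i4]
  ring

lemma circle_int {θ : ℝ} (h0 : 0 ≤ θ) (h1 : θ ≤ π) (A B : ℝ) (hAB : ¬ (A = 0 ∧ B = 0)) :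
    ∫ t in (0:ℝ)..(2*π), hfun θ (cos t * A + sin t * B) (-sin t * A + cos t * B)
      = 2 * π * (2 / π * (θ * (π - θ))) := by
  obtain ⟨r, α, hr, rfl, rfl⟩ := polar A B
  have hr' : 0 < r := lt_of_le_of_ne hr (by rintro rfl; simp at hAB)
  set f : ℝ → ℝ := fun t => (if (0 ≤ cos t ↔ 0 ≤ cos (t + θ)) then θ else π - θ) with hf
  have e : ∀ t, hfun θ (cos t * (r * cos α) + sin t * (r * sin α))
      (-sin t * (r * cos α) + cos t * (r * sin α)) = f (t - α) := by
    intro t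
    have e1 : cos t * (r * cos α) + sin t * (r * sin α) = r * cos (t - α) := by
      rw [cos_sub]; ring
    have e2 : -sin t * (r * cos α) + cos t * (r * sin α) = - (r * sin (t - α)) := by
      rw [sin_sub]; ring
    have e3 : cos θ * (r * cos (t - α)) + sin θ * (-(r * sin (t - α))) = r * cos (t - α + θ) := by
      rw [cos_add]; ring
    simp only [hfun, e1, e2, e3, hf, mul_nonneg_iff_of_pos_left hr']
  have hper : Function.Periodic f (2*π) := by
    intro t
    have : t + 2*π + θ = t + θ + 2*π := by ring
    simp only [hf, this, cos_add_two_pi]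
  simp only [e]
  rw [intervalIntegral.integral_comp_sub_right (fun t => f t)]
  have e4 : 2 * π - α = (0 - α) + 2 * π := by ring
  rw [e4, hper.intervalIntegral_add_eq (0 - α) (-(π/2)), base_int h0 h1]
  field_simp
  ring

lemma circle_null (A B : ℝ) :
    ∫ t in (0:ℝ)..(2*π), (if cos t * A + sin t * B = 0 ∧ -sin t * A + cos t * B ≠ 0 then (1:ℝ) else 0)
      = 2 * π * 0 := by
  obtain ⟨r, α, hr, rfl, rfl⟩ := polar A B
  rw [mul_zero, intervalIntegral.integral_congr_ae (g := fun _ => 0)]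
  · simp
  have hc : (Set.range fun k : ℤ => (2 * (k:ℝ) + 1) * π / 2 + α).Countable := Set.countable_range _
  filter_upwards [hc.ae_notMem volume] with t ht _
  rw [if_neg]
  rintro ⟨a, b⟩
  have e1 : cos t * (r * cos α) + sin t * (r * sin α) = r * cos (t - α) := by
    rw [cos_sub]; ring
  rw [e1, mul_eq_zero] at a
  rcases a with a | a
  · simp [a] at b
  · obtain ⟨k, hk⟩ := cos_eq_zero_iff.1 a
    exact ht ⟨k, by simp only; linarith⟩

lemma decomp {d : ℕ} (hd : 2 ≤ d) (n m : EuclideanSpace ℝ (Fin d)) (hn : ‖n‖ = 1) (hm : ‖m‖ = 1) :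
    ∃ w : EuclideanSpace ℝ (Fin d), ‖w‖ = 1 ∧ ⟪n, w⟫ = 0 ∧
      m = cos (arccos ⟪n, m⟫) • n + sin (arccos ⟪n, m⟫) • w := by
  have hab := abs_real_inner_le_norm n m
  rw [hn, hm, one_mul, abs_le] at hab
  have hcos := cos_arccos hab.1 hab.2
  set θ := arccos ⟪n, m⟫
  have hnn : ⟪n, n⟫ = 1 := by rw [real_inner_self_eq_norm_sq, hn]; norm_num
  have hmm : ⟪m, m⟫ = 1 := by rw [real_inner_self_eq_norm_sq, hm]; norm_num
  have horth : ⟪n, m - cos θ • n⟫ = 0 := by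
    rw [inner_sub_right, inner_smul_right, hnn, hcos]; ring
  have hsq : ‖m - cos θ • n‖ ^ 2 = sin θ ^ 2 := by
    rw [← real_inner_self_eq_norm_sq, inner_sub_left, inner_smul_left, horth, inner_sub_right,
      inner_smul_right, hmm, real_inner_comm, ← hcos, sin_sq]
    simp; ring
  have hs0 : 0 ≤ sin θ := sin_nonneg_of_nonneg_of_le_pi (arccos_nonneg _) (arccos_le_pi _)
  have hnorm : ‖m - cos θ • n‖ = sin θ := by
    rwa [sq_eq_sq₀ (norm_nonneg _) hs0] at hsq
  by_cases hs : sin θ = 0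
  · have hne : (ℝ ∙ n)ᗮ ≠ ⊥ := by
      intro h
      rw [Submodule.orthogonal_eq_bot_iff] at h
      have h1 := finrank_span_le_card (R := ℝ) ({n} : Set (EuclideanSpace ℝ (Fin d)))
      rw [h, finrank_top] at h1
      simp at h1
      omega
    obtain ⟨x, hx, hx0⟩ := Submodule.exists_mem_ne_zero_of_ne_bot hne
    refine ⟨‖x‖⁻¹ • x, norm_smul_inv_norm hx0, ?_, ?_⟩
    · rw [inner_smul_right, Submodule.mem_orthogonal_singleton_iff_inner_right.1 hx, mul_zero]
    · rw [hs, norm_eq_zero, sub_eq_zero] at hnorm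
      rw [hs, zero_smul, add_zero]; exact hnorm
  · refine ⟨(sin θ)⁻¹ • (m - cos θ • n), ?_, ?_, ?_⟩
    · rw [norm_smul, hnorm, norm_inv, norm_eq_abs, abs_of_nonneg hs0, inv_mul_cancel₀ hs]
    · rw [inner_smul_right, horth, mul_zero]
    · rw [smul_smul, mul_inv_cancel₀ hs, one_smul]; abel

section
open Matrix

lemma inner_dot {d : ℕ} (x y : EuclideanSpace ℝ (Fin d)) : ⟪x, y⟫ = x.ofLp ⬝ᵥ y.ofLp := by
  rw [EuclideanSpace.inner_eq_star_dotProduct, dotProduct_comm]; simp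

lemma dot_self {d : ℕ} {x : EuclideanSpace ℝ (Fin d)} (h : ‖x‖ = 1) : x.ofLp ⬝ᵥ x.ofLp = 1 := by
  rw [← inner_dot, real_inner_self_eq_norm_sq, h]; norm_num

lemma ae_ne {d : ℕ} (hd : 2 ≤ d) (μ : Measure (SOd d)) [IsProbabilityMeasure μ]
    (hμright : ∀ R₀ : SOd d, μ.map (fun R => R * R₀) = μ)
    (i : Fin d) (n : EuclideanSpace ℝ (Fin d)) (hn : ‖n‖ = 1) :
    ∀ᵐ R ∂μ, R.1 i ⬝ᵥ n.ofLp ≠ 0 := by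
  have key : ∀ j : Fin d, ∀ᵐ R ∂μ, R.1 i ⬝ᵥ n.ofLp = 0 → R.1 i j = 0 := by
    intro j
    obtain ⟨w, hw, hnw, hm⟩ := decomp hd n (EuclideanSpace.single j 1) hn (by simp)
    rw [inner_dot] at hnw
    have hmeas : Measurable (Function.uncurry
        (fun a b : ℝ => if a = 0 ∧ b ≠ 0 then (1:ℝ) else 0)) := by
      unfold Function.uncurry
      refine Measurable.ite ?_ measurable_const measurable_const
      have h1 : MeasurableSet {p : ℝ × ℝ | p.1 = 0} := measurableSet_eq_fun measurable_fst measurable_const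
      have h2 : MeasurableSet {p : ℝ × ℝ | p.2 = 0} := measurableSet_eq_fun measurable_snd measurable_const
      exact h1.inter h2.compl
    have hb : ∀ a b : ℝ, |(if a = 0 ∧ b ≠ 0 then (1:ℝ) else 0)| ≤ 1 := by
      intro a b; split_ifs <;> simp
    have h := avg μ hμright i (dot_self hn) (dot_self hw) hnw _ hmeas 1 hb 0
      (Eventually.of_forall fun R => circle_null _ _)
    rw [integral_eq_zero_iff_of_nonneg] at h
    · filter_upwards [h] with R hR h0
      have h1 : R.1 i ⬝ᵥ w.ofLp = 0 := by
        by_contra hne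
        simp [h0, hne] at hR
      have h2 := congrArg (fun x : EuclideanSpace ℝ (Fin d) => R.1 i ⬝ᵥ x.ofLp) hm
      simpa [dotProduct_add, dotProduct_smul, h0, h1] using h2
    · intro R; simp only [Pi.zero_apply]; split_ifs <;> simp
    · exact Integrable.of_bound (hmeas.comp ((meas_row i _).prodMk (meas_row i _))).aestronglyMeasurable 1
        (Eventually.of_forall fun R => hb _ _)
  filter_upwards [ae_all_iff.2 key] with R hR h0
  have h1 : R.1 * R.1ᵀ = 1 := (mem_orthogonalGroup_iff (Fin d) ℝ).1 (mem_specialOrthogonalGroup_iff.1 R.2).1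
  have h2 := congrFun (congrFun h1 i) i
  rw [mul_apply] at h2
  simp [hR _ h0] at h2

lemma rot_inner {d : ℕ} (R : SOd d) (x y : EuclideanSpace ℝ (Fin d)) :
    ⟪rot R x, rot R y⟫ = ⟪x, y⟫ := by
  have h1 : R.1ᵀ * R.1 = 1 := (mem_orthogonalGroup_iff' (Fin d) ℝ).1 (mem_specialOrthogonalGroup_iff.1 R.2).1
  rw [inner_dot, inner_dot]
  change (R.1 *ᵥ x.ofLp) ⬝ᵥ (R.1 *ᵥ y.ofLp) = _
  rw [dotProduct_mulVec, ← mulVec_transpose, mulVec_mulVec, h1, one_mulVec]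

end

theorem average_geodesic_distance
    (d : ℕ) (hd : 2 ≤ d)
    (μ : Measure (SOd d)) [IsProbabilityMeasure μ]
    (hμleft : ∀ R₀ : SOd d, μ.map (fun R => R₀ * R) = μ)
    (hμright : ∀ R₀ : SOd d, μ.map (fun R => R * R₀) = μ)
    (n m : EuclideanSpace ℝ (Fin d)) (hn : ‖n‖ = 1) (hm : ‖m‖ = 1) :
    ∫⁻ R, ENNReal.ofReal (Real.arccos ⟪Fsym (rot R n), Fsym (rot R m)⟫) ∂μ =
      ENNReal.ofReal (2 / π * (Real.arccos ⟪n, m⟫ * (π - Real.arccos ⟪n, m⟫))) := by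
  have hd0 : 0 < d := by omega
  let i : Fin d := ⟨d - 1, Nat.sub_lt hd0 Nat.one_pos⟩
  have hL : ∀ (R : SOd d) (x : EuclideanSpace ℝ (Fin d)),
      lastCoord (rot R x) = dotProduct (R.1 i) x.ofLp := by
    intro R x
    unfold lastCoord
    rw [dif_pos hd0]
    rfl
  obtain ⟨w, hw, hnw, hdec⟩ := decomp hd n m hn hm
  rw [inner_dot] at hnw
  have h0 := arccos_nonneg ⟪n, m⟫
  have h1 := arccos_le_pi ⟪n, m⟫
  have hI : ∀ R : SOd d, arccos ⟪Fsym (rot R n), Fsym (rot R m)⟫ =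
      hfun (arccos ⟪n, m⟫) (dotProduct (R.1 i) n.ofLp) (dotProduct (R.1 i) w.ofLp) := by
    intro R
    have h2 := congrArg (fun x : EuclideanSpace ℝ (Fin d) => dotProduct (R.1 i) x.ofLp) hdec
    simp only [WithLp.ofLp_add, WithLp.ofLp_smul, dotProduct_add, dotProduct_smul, smul_eq_mul] at h2
    unfold hfun
    rw [← h2]
    unfold Fsym
    rw [hL, hL]
    split_ifs with ha hb hc hc hb hc hc <;>
      simp only [inner_neg_left, inner_neg_right, neg_neg, rot_inner, arccos_neg] <;> tauto
  simp only [hI]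
  have hav := avg μ hμright i (dot_self hn) (dot_self hw) hnw _ (hfun_meas (arccos ⟪n, m⟫)) π
    (hfun_bound h0 h1) (2 / π * (Real.arccos ⟪n, m⟫ * (π - Real.arccos ⟪n, m⟫))) (by
      filter_upwards [ae_ne hd μ hμright i n hn] with R hR
      exact circle_int h0 h1 _ _ fun h => hR h.1)
  rw [← hav, ofReal_integral_eq_lintegral_ofReal]
  · exact Integrable.of_bound ((hfun_meas _).comp
      ((meas_row i _).prodMk (meas_row i _))).aestronglyMeasurable π
      (Eventually.of_forall fun R => hfun_bound h0 h1 _ _)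
  · refine Eventually.of_forall fun R => ?_
    simp only [Pi.zero_apply, hfun]
    split_ifs <;> linarith
end
end

section
/- Let d ≥ 2. For all n, m ∈ S^{d-1}, it holds ∫_{SO(d)} ‖F(Rn) − F(Rm)‖_{ℝ^d} dμ(R) ≤ (1 + 2/π) · (1/√2)·‖n⊗n − m⊗m‖, where ‖n⊗n − m⊗m‖ is the Frobenius norm of the d×d matrix n⊗n − m⊗m. -/
noncomputable section
open MeasureTheory Real Filter
open scoped ENNReal RealInnerProductSpace

/-!
STATEMENT 7: the jump estimate (estim:jump) of Theorem 4.1 with the optimal constant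
C^j = 1 + 2/π of the tensorial embedding:
∫ ‖F(Rn) − F(Rm)‖ dμ(R) ≤ (1 + 2/π)·(1/√2)·‖n⊗n − m⊗m‖.
-/


namespace AvgProof

/-- The linear functional `x ↦ ⟪R x, e_d⟫`. -/
def L {d : ℕ} (R : SOd d) (x : EuclideanSpace ℝ (Fin d)) : ℝ := lastCoord (rot R x)

lemma rotAct_eq {d : ℕ} (R : Matrix (Fin d) (Fin d) ℝ) (x : EuclideanSpace ℝ (Fin d)) :
    rotAct R x = WithLp.toLp 2 (R.mulVec x.ofLp) := rfl

lemma rotAct_apply {d : ℕ} (R : Matrix (Fin d) (Fin d) ℝ) (x : EuclideanSpace ℝ (Fin d)) (i : Fin d) :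
    rotAct R x i = ∑ j, R i j * x j := by
  simp [rotAct, Matrix.mulVec, dotProduct]

lemma rotAct_add {d : ℕ} (R : Matrix (Fin d) (Fin d) ℝ) (x y : EuclideanSpace ℝ (Fin d)) :
    rotAct R (x + y) = rotAct R x + rotAct R y := by
  ext i; simp [rotAct_apply, mul_add, Finset.sum_add_distrib]

lemma rotAct_smul {d : ℕ} (R : Matrix (Fin d) (Fin d) ℝ) (c : ℝ) (x : EuclideanSpace ℝ (Fin d)) :
    rotAct R (c • x) = c • rotAct R x := by
  ext i; simp [rotAct_apply, Finset.mul_sum, mul_left_comm]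

lemma rotAct_mul {d : ℕ} (R Q : Matrix (Fin d) (Fin d) ℝ) (x : EuclideanSpace ℝ (Fin d)) :
    rotAct (R * Q) x = rotAct R (rotAct Q x) := by
  simp [rotAct_eq, Matrix.mulVec_mulVec]

lemma rot_norm {d : ℕ} (R : SOd d) (x : EuclideanSpace ℝ (Fin d)) : ‖rot R x‖ = ‖x‖ := by
  have h : (R : Matrix (Fin d) (Fin d) ℝ).transpose * (R : Matrix (Fin d) (Fin d) ℝ) = 1 :=
    (Matrix.mem_orthogonalGroup_iff' (Fin d) ℝ).1 (Matrix.mem_specialOrthogonalGroup_iff.1 R.2).1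
  have key : ∀ y : EuclideanSpace ℝ (Fin d), ‖y‖ = √ (dotProduct (y : Fin d → ℝ) y) := by
    intro y
    simp [EuclideanSpace.norm_eq, dotProduct, sq]
  rw [key, key]
  congr 1
  have : ((rot R x : EuclideanSpace ℝ (Fin d)) : Fin d → ℝ) =
    Matrix.mulVec (R : Matrix (Fin d) (Fin d) ℝ) (x : Fin d → ℝ) := by
    simp [rot, rotAct_eq]
  rw [this, Matrix.dotProduct_mulVec, Matrix.vecMul_mulVec, h, Matrix.vecMul_one]

lemma L_eq {d : ℕ} (hd : 0 < d) (R : SOd d) (x : EuclideanSpace ℝ (Fin d)) :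
    L R x = ∑ j, (R : Matrix (Fin d) (Fin d) ℝ) ⟨d - 1, Nat.sub_lt hd Nat.one_pos⟩ j * x j := by
  simp [L, lastCoord, hd, rot, rotAct_apply]

lemma L_add {d : ℕ} (hd : 0 < d) (R : SOd d) (x y : EuclideanSpace ℝ (Fin d)) :
    L R (x + y) = L R x + L R y := by
  simp [L_eq hd, mul_add, Finset.sum_add_distrib]

lemma L_smul {d : ℕ} (hd : 0 < d) (R : SOd d) (c : ℝ) (x : EuclideanSpace ℝ (Fin d)) :
    L R (c • x) = c * L R x := by
  simp [L_eq hd, Finset.mul_sum, mul_left_comm]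

lemma entry_meas {d : ℕ} (i j : Fin d) :
    Measurable (fun R : SOd d => (R : Matrix (Fin d) (Fin d) ℝ) i j) :=
  (measurable_pi_apply j).comp ((measurable_pi_apply i).comp measurable_subtype_coe)

lemma L_meas {d : ℕ} (hd : 0 < d) (x : EuclideanSpace ℝ (Fin d)) :
    Measurable (fun R : SOd d => L R x) := by
  simp only [L_eq hd]
  exact Finset.measurable_sum _ fun j _ => (entry_meas _ j).mul_const _

lemma mulR_meas {d : ℕ} (Q : SOd d) : Measurable (fun R : SOd d => R * Q) := by
  refine Measurable.subtype_mk ?_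
  refine measurable_pi_iff.2 fun i => measurable_pi_iff.2 fun j => ?_
  have : (fun R : SOd d => ((R : Matrix (Fin d) (Fin d) ℝ) * (Q : Matrix (Fin d) (Fin d) ℝ)) i j) =
    fun R : SOd d => ∑ k, (R : Matrix (Fin d) (Fin d) ℝ) i k * (Q : Matrix (Fin d) (Fin d) ℝ) k j := by
    ext R; simp [Matrix.mul_apply]
  exact this ▸ Finset.measurable_sum _ fun k _ => (entry_meas i k).mul_const _

/-- Rotation by angle `t` in the plane of `u, v`. -/
def Qm {d : ℕ} (u v : Fin d → ℝ) (t : ℝ) : Matrix (Fin d) (Fin d) ℝ :=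
  1 + (cos t - 1) • (Matrix.vecMulVec u u + Matrix.vecMulVec v v) +
    sin t • (Matrix.vecMulVec v u - Matrix.vecMulVec u v)

lemma Qm_zero {d : ℕ} (u v : Fin d → ℝ) : Qm u v 0 = 1 := by simp [Qm]

lemma Qm_transpose {d : ℕ} (u v : Fin d → ℝ) (t : ℝ) : (Qm u v t).transpose = Qm u v (-t) := by
  ext i j
  simp [Qm, Matrix.vecMulVec_apply, Matrix.one_apply, eq_comm]
  ring

lemma Qm_mul {d : ℕ} (u v : Fin d → ℝ) (huu : dotProduct u u = 1) (hvv : dotProduct v v = 1)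
    (huv : dotProduct u v = 0) (s t : ℝ) : Qm u v s * Qm u v t = Qm u v (s + t) := by
  have hvu : dotProduct v u = 0 := by rw [dotProduct_comm, huv]
  simp only [Qm, mul_add, add_mul, mul_sub, sub_mul, Matrix.smul_mul, Matrix.mul_smul, one_mul,
    mul_one, Matrix.vecMulVec_mul_vecMulVec, huu, hvv, huv, hvu, one_smul, zero_smul,
    Matrix.vecMulVec_zero, cos_add, sin_add, smul_add, smul_sub, smul_zero]
  module

lemma Qm_mem {d : ℕ} (u v : Fin d → ℝ) (huu : dotProduct u u = 1) (hvv : dotProduct v v = 1)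
    (huv : dotProduct u v = 0) (t : ℝ) : Qm u v t ∈ Matrix.specialOrthogonalGroup (Fin d) ℝ := by
  have h1 : ∀ t, (Qm u v t).transpose * Qm u v t = 1 := fun t => by
    rw [Qm_transpose, Qm_mul u v huu hvv huv, neg_add_cancel, Qm_zero]
  have h2 : (Qm u v t).det = 1 := by
    have := Qm_mul u v huu hvv huv (t/2) (t/2)
    rw [add_halves] at this
    have h3 := congrArg Matrix.det (h1 (t/2))
    rw [Matrix.det_mul, Matrix.det_transpose, Matrix.det_one] at h3
    rw [← this, Matrix.det_mul, h3]
  exact Matrix.mem_specialOrthogonalGroup_iff.2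
    ⟨(Matrix.mem_orthogonalGroup_iff' (Fin d) ℝ).2 (h1 t), h2⟩

lemma Qm_u {d : ℕ} (u v : EuclideanSpace ℝ (Fin d)) (huu : dotProduct (u : Fin d → ℝ) u = 1)
    (huv : dotProduct (u : Fin d → ℝ) v = 0) (t : ℝ) :
    rotAct (Qm u v t) u = cos t • u + sin t • v := by
  have hvu : dotProduct (v : Fin d → ℝ) u = 0 := by rw [dotProduct_comm, huv]
  ext i
  simp [rotAct_eq, Qm, Matrix.add_mulVec, Matrix.sub_mulVec, Matrix.smul_mulVec,
    Matrix.vecMulVec_mulVec, huu, hvu]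
  ring

lemma Qm_v {d : ℕ} (u v : EuclideanSpace ℝ (Fin d)) (hvv : dotProduct (v : Fin d → ℝ) v = 1)
    (huv : dotProduct (u : Fin d → ℝ) v = 0) (t : ℝ) :
    rotAct (Qm u v t) v = (-sin t) • u + cos t • v := by
  ext i
  simp [rotAct_eq, Qm, Matrix.add_mulVec, Matrix.sub_mulVec, Matrix.smul_mulVec,
    Matrix.vecMulVec_mulVec, hvv, huv]
  ring

lemma avg {d : ℕ} (hd : 0 < d) (μ : Measure (SOd d)) [IsProbabilityMeasure μ]
    (hμright : ∀ R₀ : SOd d, μ.map (fun R => R * R₀) = μ)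
    (u v : EuclideanSpace ℝ (Fin d)) (huu : dotProduct (u : Fin d → ℝ) u = 1)
    (hvv : dotProduct (v : Fin d → ℝ) v = 1)
    (huv : dotProduct (u : Fin d → ℝ) v = 0) (S : Set (ℝ × ℝ)) (hS : MeasurableSet S)
    (c : ℝ≥0∞)
    (hc : ∀ r α : ℝ, 0 ≤ r →
      volume ({φ | (r * cos (α - φ), r * sin (α - φ)) ∈ S} ∩ Set.Ioc 0 π) ≤ c) :
    ENNReal.ofReal π * μ {R | (L R u, L R v) ∈ S} ≤ c := by
  let f : SOd d × ℝ → ℝ × ℝ := fun p =>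
    (cos p.2 * L p.1 u + sin p.2 * L p.1 v, (-sin p.2) * L p.1 u + cos p.2 * L p.1 v)
  have mu : Measurable (fun p : SOd d × ℝ => L p.1 u) := (L_meas hd u).comp measurable_fst
  have mv : Measurable (fun p : SOd d × ℝ => L p.1 v) := (L_meas hd v).comp measurable_fst
  have mc : Measurable (fun p : SOd d × ℝ => cos p.2) := measurable_cos.comp measurable_snd
  have ms : Measurable (fun p : SOd d × ℝ => sin p.2) := measurable_sin.comp measurable_snd
  have hf : Measurable f :=
    ((mc.mul mu).add (ms.mul mv)).prodMk ((ms.neg.mul mu).add (mc.mul mv))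
  have hT : MeasurableSet (f ⁻¹' S) := hf hS
  set ν := (volume : Measure ℝ).restrict (Set.Ioc 0 π) with hν
  have h1 := Measure.prod_apply (μ := μ) (ν := ν) hT
  have h2 := Measure.prod_apply_symm (μ := μ) (ν := ν) hT
  have hA : MeasurableSet {R : SOd d | (L R u, L R v) ∈ S} :=
    ((L_meas hd u).prodMk (L_meas hd v)) hS
  have h3 : ∀ t : ℝ, μ ((fun R => (R, t)) ⁻¹' (f ⁻¹' S)) = μ {R | (L R u, L R v) ∈ S} := by
    intro t
    let Q : SOd d := ⟨Qm u v t, Qm_mem _ _ huu hvv huv t⟩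
    conv_rhs => rw [← hμright Q, Measure.map_apply (mulR_meas Q) hA]
    congr 1
    ext R
    have e1 : ∀ x, L (R * Q) x = L R (rotAct (Qm u v t) x) := by
      intro x; simp only [L, rot, ← rotAct_mul]; rfl
    simp only [Set.mem_preimage, Set.mem_setOf_eq, e1, Qm_u u v huu huv, Qm_v u v hvv huv,
      L_add hd, L_smul hd, f]
  simp only [h3, lintegral_const] at h2
  have h4 : ν Set.univ = ENNReal.ofReal π := by simp [hν]
  rw [h4, mul_comm] at h2
  rw [← h2, h1]
  calc _ ≤ ∫⁻ _ : SOd d, c ∂μ := by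
        refine lintegral_mono fun R => ?_
        have hm : MeasurableSet (Prod.mk R ⁻¹' (f ⁻¹' S)) := measurable_prodMk_left hT
        simp only
        rw [hν, Measure.restrict_apply hm]
        set z : ℂ := ⟨L R u, L R v⟩
        refine le_trans (le_of_eq ?_) (hc ‖z‖ z.arg (norm_nonneg _))
        congr 2
        ext t
        have ha : L R u = ‖z‖ * cos z.arg := (Complex.norm_mul_cos_arg z).symm
        have hb : L R v = ‖z‖ * sin z.arg := (Complex.norm_mul_sin_arg z).symm
        simp only [Set.mem_preimage, Set.mem_setOf_eq, f, ha, hb, cos_sub, sin_sub]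
        ring_nf
    _ = c := by simp

lemma null_pair {d : ℕ} (hd : 0 < d) (μ : Measure (SOd d)) [IsProbabilityMeasure μ]
    (hμright : ∀ R₀ : SOd d, μ.map (fun R => R * R₀) = μ)
    (u v : EuclideanSpace ℝ (Fin d)) (huu : dotProduct (u : Fin d → ℝ) u = 1)
    (hvv : dotProduct (v : Fin d → ℝ) v = 1)
    (huv : dotProduct (u : Fin d → ℝ) v = 0) : ∀ᵐ R ∂μ, L R u = 0 → L R v = 0 := by
  have := avg hd μ hμright u v huu hvv huv {p | p.1 = 0 ∧ p.2 ≠ 0}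
    ((measurableSet_eq_fun measurable_fst measurable_const).inter
      (measurableSet_eq_fun measurable_snd measurable_const).compl) 0 (by
      intro r α hr
      refine le_of_eq (measure_mono_null (t := Set.range (fun k : ℤ => α - (2 * k + 1) * π / 2)) ?_
        ((Set.countable_range _).measure_zero _))
      rintro φ ⟨⟨h1, h2⟩, -⟩
      simp only at h1 h2
      have hr0 : r ≠ 0 := by rintro rfl; simp at h2
      obtain ⟨k, hk⟩ := Real.cos_eq_zero_iff.1 ((mul_eq_zero.1 h1).resolve_left hr0)
      exact ⟨k, by simp only; linarith⟩)
  have h0 := (mul_eq_zero.1 (le_antisymm this bot_le)).resolve_left (by simp [pi_pos])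
  rw [ae_iff]
  convert h0 using 2
  ext R; simp

lemma dot_self_iff {d : ℕ} (u : EuclideanSpace ℝ (Fin d)) : dotProduct (u : Fin d → ℝ) u = ‖u‖ ^ 2 := by
  rw [EuclideanSpace.real_norm_sq_eq]; simp [dotProduct, sq]

lemma dot_inner {d : ℕ} (u v : EuclideanSpace ℝ (Fin d)) : dotProduct (u : Fin d → ℝ) v = ⟪u, v⟫ := by
  simp [PiLp.inner_apply, dotProduct, mul_comm]

lemma null_perp {d : ℕ} (hd : 0 < d) (μ : Measure (SOd d)) [IsProbabilityMeasure μ]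
    (hμright : ∀ R₀ : SOd d, μ.map (fun R => R * R₀) = μ)
    (u v : EuclideanSpace ℝ (Fin d)) (hu : ‖u‖ = 1) (huv : ⟪u, v⟫ = 0) :
    ∀ᵐ R ∂μ, L R u = 0 → L R v = 0 := by
  by_cases hv : v = 0
  · subst hv
    exact Eventually.of_forall fun R _ => by simp [L_eq hd]
  have hv' : ‖v‖ ≠ 0 := norm_ne_zero_iff.2 hv
  have := null_pair hd μ hμright u (‖v‖⁻¹ • v) (by rw [dot_self_iff, hu]; norm_num)
    (by rw [dot_self_iff, norm_smul]; simp [hv']) (by rw [dot_inner, inner_smul_right, huv, mul_zero])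
  filter_upwards [this] with R hR h
  have := hR h
  rw [L_smul hd] at this
  exact (mul_eq_zero.1 this).resolve_left (inv_ne_zero hv')

lemma ae_ne {d : ℕ} (hd : 0 < d) (μ : Measure (SOd d)) [IsProbabilityMeasure μ]
    (hμright : ∀ R₀ : SOd d, μ.map (fun R => R * R₀) = μ)
    (u : EuclideanSpace ℝ (Fin d)) (hu : ‖u‖ = 1) : ∀ᵐ R ∂μ, L R u ≠ 0 := by
  have h : ∀ x : EuclideanSpace ℝ (Fin d), ∀ᵐ R ∂μ, L R u = 0 → L R x = 0 := by
    intro x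
    have := null_perp hd μ hμright u (x + (-⟪u, x⟫) • u) hu (by
      rw [inner_add_right, inner_smul_right, real_inner_self_eq_norm_sq, hu]; ring)
    filter_upwards [this] with R hR h
    have := hR h
    rw [L_add hd, L_smul hd, h] at this
    simpa using this
  have h' : ∀ᵐ R ∂μ, ∀ i : Fin d, L R u = 0 → L R (EuclideanSpace.single i (1:ℝ)) = 0 :=
    ae_all_iff.2 fun i => h _
  filter_upwards [h'] with R hR h0
  have hrow : ∀ j, (R : Matrix (Fin d) (Fin d) ℝ) ⟨d - 1, Nat.sub_lt hd Nat.one_pos⟩ j = 0 := by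
    intro j
    have := hR j h0
    rw [L_eq hd] at this
    simpa [EuclideanSpace.single_apply] using this
  have hdet := (Matrix.mem_specialOrthogonalGroup_iff.1 R.2).2
  rw [Matrix.det_eq_zero_of_row_eq_zero _ hrow] at hdet
  exact zero_ne_one hdet

lemma vol_bound (θ : ℝ) (h0 : 0 ≤ θ) (h1 : θ ≤ π / 2) (α : ℝ) :
    volume ({φ | cos (α - φ) * cos (α - φ - θ) < 0} ∩ Set.Ioc 0 π) ≤ ENNReal.ofReal θ := by
  set A := {φ | cos (α - φ) * cos (α - φ - θ) < 0} with hA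
  have hAm : MeasurableSet A := by
    apply measurableSet_lt _ measurable_const
    exact (by fun_prop : Continuous fun φ => cos (α - φ) * cos (α - φ - θ)).measurable
  have d1 := isAddFundamentalDomain_Ioc pi_pos 0 (volume)
  have d2 := isAddFundamentalDomain_Ioc pi_pos (α - π / 2) (volume)
  have hinv : ∀ g : AddSubgroup.zmultiples π, (fun x => g +ᵥ x) ⁻¹' A = A := by
    rintro ⟨g, hg⟩
    obtain ⟨k, rfl⟩ := AddSubgroup.mem_zmultiples_iff.1 hg
    ext x
    have e : ∀ y, cos (y - k * π) = (-1) ^ k * cos y := fun y => Real.cos_sub_int_mul_pi y k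
    have h1 : α - (k * π + x) = (α - x) - k * π := by ring
    have h2 : α - (k * π + x) - θ = (α - x - θ) - k * π := by ring
    have h3 : ((-1:ℝ) ^ k) * (-1) ^ k = 1 := by
      rw [← mul_zpow]; simp
    simp only [hA, Set.mem_preimage, Set.mem_setOf_eq, AddSubgroup.vadd_def, vadd_eq_add,
      zsmul_eq_mul]
    rw [h2, h1, e, e, mul_mul_mul_comm, h3, one_mul]
  have := d1.measure_set_eq d2 hAm hinv
  rw [zero_add] at this
  rw [this]
  refine (measure_mono (t := Set.Icc (α + π / 2 - θ) (α + π / 2)) ?_).trans ?_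
  · rintro x ⟨hx, hx1, hx2⟩
    refine ⟨?_, by linarith⟩
    by_contra hlt
    push Not at hlt
    have c1 : 0 ≤ cos (α - x) := cos_nonneg_of_neg_pi_div_two_le_of_le (by linarith) (by linarith)
    have c2 : 0 ≤ cos (α - x - θ) := cos_nonneg_of_neg_pi_div_two_le_of_le (by linarith) (by linarith)
    exact absurd hx (not_lt.2 (mul_nonneg c1 c2))
  · rw [Real.volume_Icc]; apply le_of_eq; congr 1; ring

lemma prob_bound {d : ℕ} (hd : 0 < d) (μ : Measure (SOd d)) [IsProbabilityMeasure μ]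
    (hμright : ∀ R₀ : SOd d, μ.map (fun R => R * R₀) = μ)
    (u v m : EuclideanSpace ℝ (Fin d)) (hu : ‖u‖ = 1) (hv : ‖v‖ = 1) (huv : ⟪u, v⟫ = 0)
    (θ : ℝ) (h0 : 0 ≤ θ) (h1 : θ ≤ π / 2) (hm : m = cos θ • u + sin θ • v) :
    μ {R | L R u * L R m < 0} ≤ ENNReal.ofReal (θ / π) := by
  have := avg hd μ hμright u v (by rw [dot_self_iff, hu]; norm_num)
    (by rw [dot_self_iff, hv]; norm_num) (by rw [dot_inner, huv])
    {p | p.1 * (cos θ * p.1 + sin θ * p.2) < 0}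
    (measurableSet_lt (by fun_prop) measurable_const) (ENNReal.ofReal θ) (by
      intro r α hr
      refine (measure_mono ?_).trans (vol_bound θ h0 h1 α)
      rintro φ ⟨h, h'⟩
      refine ⟨?_, h'⟩
      simp only [Set.mem_setOf_eq] at h ⊢
      rw [cos_sub (α - φ) θ]
      by_contra hc
      push Not at hc
      nlinarith [mul_nonneg (mul_nonneg hr hr) hc])
  rw [ENNReal.ofReal_div_of_pos pi_pos, ENNReal.le_div_iff_mul_le (by simp [pi_pos]) (by simp),
    mul_comm]
  convert this using 4
  simp only [Set.mem_setOf_eq, hm, L_add hd, L_smul hd]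

lemma real_ineq (t : ℝ) (h0 : 0 ≤ t) (h1 : t ≤ π / 4) :
    sin t + (cos t - sin t) * (2 * t / π) ≤ (1 + 2 / π) * (sin t * cos t) := by
  have hpi := pi_pos
  have hpi3 := pi_gt_three
  have hpi4 := pi_lt_d2
  have hc : 0 < cos t := cos_pos_of_mem_Ioo ⟨by linarith, by linarith⟩
  have hs : 0 ≤ sin t := sin_nonneg_of_nonneg_of_le_pi h0 (by linarith)
  have hsc : sin t ≤ cos t := by
    rw [← cos_pi_div_two_sub]
    exact cos_le_cos_of_nonneg_of_le_pi h0 (by linarith) (by linarith)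
  have ht : t * cos t ≤ sin t := by
    have := Real.le_tan h0 (by linarith)
    rwa [tan_eq_sin_div_cos, le_div_iff₀ hc] at this
  have hsq := sin_sq_add_cos_sq t
  have hc1 := cos_le_one t
  set s := sin t
  set c := cos t
  -- reduce to `π/2 * s * (1-c) + t (c - s) ≤ s c`
  have key : (π / 2) * (s * (1 - c)) + t * (c - s) ≤ s * c := by
    have hh : (π / 2 + 1) * (s * c) ≤ 1 + c := by nlinarith [sq_nonneg (s - c)]
    have h2 : c * ((π / 2) * (s * (1 - c)) + t * (c - s)) ≤ c * (s * c) := by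
      have a1 : t * c * (c - s) ≤ s * (c - s) := mul_le_mul_of_nonneg_right ht (by linarith)
      have a2 : (π / 2 + 1) * (c * (1 - c)) ≤ s := by
        by_cases hs0 : s = 0
        · have : c = 1 := by nlinarith
          simp [this, hs]
        have hsp : 0 < s := lt_of_le_of_ne hs (Ne.symm hs0)
        have : s * ((π / 2 + 1) * (c * (1 - c))) ≤ s * s := by
          have := mul_le_mul_of_nonneg_right hh (by linarith : 0 ≤ 1 - c)
          nlinarith
        exact le_of_mul_le_mul_left this hsp
      nlinarith [mul_le_mul_of_nonneg_left a2 hs]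
    exact le_of_mul_le_mul_left h2 hc
  have e : (1 + 2 / π) * (s * c) - (s + (c - s) * (2 * t / π)) =
    (2 / π) * (s * c - ((π / 2) * (s * (1 - c)) + t * (c - s))) := by
    field_simp; ring
  have : 0 ≤ (2 / π) * (s * c - ((π / 2) * (s * (1 - c)) + t * (c - s))) :=
    mul_nonneg (by positivity) (by linarith)
  linarith

lemma frob {d : ℕ} (n m : EuclideanSpace ℝ (Fin d)) (hn : ‖n‖ = 1) (hm : ‖m‖ = 1) :
    (1 / √2) * frobNorm (outer n n - outer m m) = √(1 - ⟪n, m⟫ ^ 2) := by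
  have h : ∑ i, ∑ j, ((outer n n - outer m m) i j) ^ 2 = 2 * (1 - ⟪n, m⟫ ^ 2) := by
    have e : ∀ i j, ((outer n n - outer m m) i j) ^ 2 =
      (n i * n i) * (n j * n j) - 2 * ((n i * m i) * (n j * m j)) + (m i * m i) * (m j * m j) := by
      intro i j; simp only [outer, Pi.sub_apply]; ring
    have hn' := dot_self_iff n
    have hm' := dot_self_iff m
    have hnm := dot_inner n m
    simp only [dotProduct] at hn' hm' hnm
    simp only [e, Finset.sum_add_distrib, Finset.sum_sub_distrib, ← Finset.mul_sum,
      ← Finset.sum_mul, hn', hm', hnm, hn, hm]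
    ring
  rw [frobNorm, h, Real.sqrt_mul (by norm_num), ← mul_assoc]
  simp

lemma pos_case {d : ℕ} (hd : 0 < d) (μ : Measure (SOd d)) [IsProbabilityMeasure μ]
    (hμright : ∀ R₀ : SOd d, μ.map (fun R => R * R₀) = μ)
    (n m : EuclideanSpace ℝ (Fin d)) (hn : ‖n‖ = 1) (hm : ‖m‖ = 1) (hnm : 0 ≤ ⟪n, m⟫) :
    ∫⁻ R, ENNReal.ofReal ‖Fsym (rot R n) - Fsym (rot R m)‖ ∂μ ≤
      ENNReal.ofReal ((1 + 2 / π) * √(1 - ⟪n, m⟫ ^ 2)) := by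
  by_cases hne : n = m
  · subst hne; simp
  have hle : ⟪n, m⟫ ≤ 1 := by
    have := real_inner_le_norm n m; rwa [hn, hm, one_mul] at this
  set θ := arccos ⟪n, m⟫ with hθ
  have hcos : cos θ = ⟪n, m⟫ := cos_arccos (by linarith) hle
  have hsin : sin θ = √(1 - ⟪n, m⟫ ^ 2) := sin_arccos _
  have hlt : ⟪n, m⟫ < 1 := lt_of_le_of_ne hle fun h => hne ((inner_eq_one_iff_of_norm_eq_one hn hm).1 h)
  have hsp : 0 < sin θ := by rw [hsin]; apply Real.sqrt_pos.2; nlinarith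
  have hθ0 : 0 ≤ θ := arccos_nonneg _
  have hθ1 : θ ≤ π / 2 := arccos_le_pi_div_two.2 hnm
  have hsq := sin_sq_add_cos_sq θ
  set v := (sin θ)⁻¹ • (m - cos θ • n) with hv
  have hmv : m = cos θ • n + sin θ • v := by
    rw [hv, smul_smul, mul_inv_cancel₀ hsp.ne', one_smul]; abel
  have hnv : ⟪n, v⟫ = 0 := by
    rw [hv, inner_smul_right, inner_sub_right, inner_smul_right, real_inner_self_eq_norm_sq, hn,
      hcos]; ring
  have hvn : ‖v‖ = 1 := by
    have h1 : ‖m‖ ^ 2 = cos θ ^ 2 + sin θ ^ 2 * ‖v‖ ^ 2 := by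
      conv_lhs => rw [hmv, norm_add_sq_real, inner_smul_left, inner_smul_right, hnv,
        norm_smul, norm_smul, hn]
      simp [mul_pow]
    rw [hm] at h1
    have h2 : sin θ ^ 2 * (‖v‖ ^ 2 - 1) = 0 := by linarith
    have h3 := (mul_eq_zero.1 h2).resolve_left (by positivity)
    nlinarith [norm_nonneg v]
  have hprob := prob_bound hd μ hμright n v m hn hvn hnv θ hθ0 hθ1 hmv
  have hth : θ = 2 * (θ / 2) := by ring
  have hs2 : 0 ≤ sin (θ / 2) := sin_nonneg_of_nonneg_of_le_pi (by linarith) (by linarith [pi_pos])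
  have hc2 : 0 ≤ cos (θ / 2) :=
    cos_nonneg_of_neg_pi_div_two_le_of_le (by linarith [pi_pos]) (by linarith [pi_pos])
  have hsc2 : sin (θ / 2) ≤ cos (θ / 2) := by
    rw [← cos_pi_div_two_sub]
    exact cos_le_cos_of_nonneg_of_le_pi (by linarith) (by linarith [pi_pos]) (by linarith)
  have hcos2 : cos θ = 2 * cos (θ / 2) ^ 2 - 1 := by conv_lhs => rw [hth, cos_two_mul]
  have hsin2 : sin θ = 2 * sin (θ / 2) * cos (θ / 2) := by conv_lhs => rw [hth, sin_two_mul]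
  have hsq2 := sin_sq_add_cos_sq (θ / 2)
  have hsub : ‖n - m‖ = 2 * sin (θ / 2) := by
    rw [← sq_eq_sq₀ (norm_nonneg _) (by linarith), norm_sub_sq_real, hn, hm, ← hcos, hcos2]
    nlinarith
  have hadd : ‖n + m‖ = 2 * cos (θ / 2) := by
    rw [← sq_eq_sq₀ (norm_nonneg _) (by linarith), norm_add_sq_real, hn, hm, ← hcos, hcos2]
    nlinarith
  have hRsub : ∀ R : SOd d, ‖rot R n - rot R m‖ = ‖n - m‖ := fun R => by
    rw [← rot_norm R (n - m), sub_eq_add_neg n m, ← neg_one_smul ℝ m, rot, rot, rot, rotAct_add,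
      rotAct_smul, neg_one_smul, sub_eq_add_neg]
  have hRadd : ∀ R : SOd d, ‖rot R n + rot R m‖ = ‖n + m‖ := fun R => by
    rw [← rot_norm R (n + m), rot, rot, rot, rotAct_add]
  set B := {R : SOd d | L R n * L R m < 0} with hB
  have hBm : MeasurableSet B :=
    measurableSet_lt ((L_meas hd n).mul (L_meas hd m)) measurable_const
  have hdiff : 0 ≤ 2 * cos (θ / 2) - 2 * sin (θ / 2) := by linarith
  calc _ ≤ ∫⁻ R, (ENNReal.ofReal (2 * sin (θ / 2)) +
        B.indicator (fun _ => ENNReal.ofReal (2 * cos (θ / 2) - 2 * sin (θ / 2))) R) ∂μ := by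
        refine lintegral_mono_ae ?_
        filter_upwards [ae_ne hd μ hμright n hn, ae_ne hd μ hμright m hm] with R h1 h2
        by_cases hR : R ∈ B
        · rw [Set.indicator_of_mem hR, ← ENNReal.ofReal_add (by linarith) hdiff]
          apply ENNReal.ofReal_le_ofReal
          have hR' : L R n * L R m < 0 := hR
          have : ‖Fsym (rot R n) - Fsym (rot R m)‖ = ‖rot R n + rot R m‖ := by
            rcases mul_neg_iff.1 hR' with ⟨a, b⟩ | ⟨a, b⟩
            · rw [Fsym, Fsym, if_pos (show 0 ≤ lastCoord (rot R n) from a.le),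
                if_neg (show ¬ 0 ≤ lastCoord (rot R m) from not_le.2 b), sub_neg_eq_add]
            · rw [Fsym, Fsym, if_neg (show ¬ 0 ≤ lastCoord (rot R n) from not_le.2 a),
                if_pos (show 0 ≤ lastCoord (rot R m) from b.le), ← norm_neg]
              congr 1; abel
          rw [this, hRadd, hadd]; linarith
        · rw [Set.indicator_of_notMem hR, add_zero]
          apply ENNReal.ofReal_le_ofReal
          have hR' : 0 < L R n * L R m :=
            lt_of_le_of_ne (not_lt.1 hR) (Ne.symm (mul_ne_zero h1 h2))
          have : ‖Fsym (rot R n) - Fsym (rot R m)‖ = ‖rot R n - rot R m‖ := by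
            rcases mul_pos_iff.1 hR' with ⟨a, b⟩ | ⟨a, b⟩
            · rw [Fsym, Fsym, if_pos (show 0 ≤ lastCoord (rot R n) from a.le),
                if_pos (show 0 ≤ lastCoord (rot R m) from b.le)]
            · rw [Fsym, Fsym, if_neg (show ¬ 0 ≤ lastCoord (rot R n) from not_le.2 a),
                if_neg (show ¬ 0 ≤ lastCoord (rot R m) from not_le.2 b), ← norm_neg]
              congr 1; abel
          rw [this, hRsub, hsub]
    _ = ENNReal.ofReal (2 * sin (θ / 2)) +
        ENNReal.ofReal (2 * cos (θ / 2) - 2 * sin (θ / 2)) * μ B := by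
        rw [lintegral_add_left measurable_const, lintegral_indicator_const hBm]
        simp
    _ ≤ ENNReal.ofReal (2 * sin (θ / 2)) +
        ENNReal.ofReal (2 * cos (θ / 2) - 2 * sin (θ / 2)) * ENNReal.ofReal (θ / π) := by
        gcongr
    _ ≤ _ := by
        rw [← ENNReal.ofReal_mul hdiff, ← ENNReal.ofReal_add (by linarith)
          (mul_nonneg hdiff (div_nonneg hθ0 pi_pos.le)), ← hsin]
        apply ENNReal.ofReal_le_ofReal
        have := real_ineq (θ / 2) (by linarith) (by linarith)
        rw [← hth] at this
        rw [hsin2]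
        linarith

end AvgProof

theorem average_euclidean_distance_le_tensor
    (d : ℕ) (hd : 2 ≤ d)
    (μ : Measure (SOd d)) [IsProbabilityMeasure μ]
    (hμleft : ∀ R₀ : SOd d, μ.map (fun R => R₀ * R) = μ)
    (hμright : ∀ R₀ : SOd d, μ.map (fun R => R * R₀) = μ)
    (n m : EuclideanSpace ℝ (Fin d)) (hn : ‖n‖ = 1) (hm : ‖m‖ = 1) :
    ∫⁻ R, ENNReal.ofReal ‖Fsym (rot R n) - Fsym (rot R m)‖ ∂μ ≤
      ENNReal.ofReal ((1 + 2 / π) * ((1 / Real.sqrt 2) * frobNorm (outer n n - outer m m))) := by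

  have hd0 : 0 < d := by omega
  rw [AvgProof.frob n m hn hm]
  rcases le_total 0 (inner ℝ n m) with h | h
  · exact AvgProof.pos_case hd0 μ hμright n m hn hm h
  · have := AvgProof.pos_case hd0 μ hμright (-n) m (by rwa [norm_neg]) hm
      (by rw [inner_neg_left]; linarith)
    rw [inner_neg_left, neg_sq] at this
    refine le_trans (le_of_eq (lintegral_congr_ae ?_)) this
    filter_upwards [AvgProof.ae_ne hd0 μ hμright n hn] with R hR
    have hneg : rot R (-n) = - rot R n := by
      rw [← neg_one_smul ℝ n, rot, AvgProof.rotAct_smul, neg_one_smul]; rfl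
    have hl : lastCoord (-rot R n) = - lastCoord (rot R n) := by
      simp [lastCoord, hd0]
    have hR' : lastCoord (rot R n) ≠ 0 := hR
    have : Fsym (rot R (-n)) = Fsym (rot R n) := by
      rw [hneg, Fsym, Fsym, hl]
      rcases lt_or_gt_of_ne hR' with a | a
      · rw [if_pos (by linarith), if_neg (by linarith)]
      · rw [if_neg (by linarith), if_pos a.le, neg_neg]
    rw [this]
end
end
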